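/- For every prime p, every S-ring over a cyclic p-group is separable with respect to the class 𝒦_C of finite cyclic groups. -/

import Mathlib

/-!
Write the cyclic `p`-group `G` additively. After a group isomorphism between the two cyclic groups
is fixed, an algebraic isomorphism of S-rings becomes a pair of colourings `a b : G → ι` of the same
group that are *matched* (`Matched`): the classes of `a` and of `b` are the basic sets, classes of
equal colour correspond, and corresponding structure constants agree, which is expressed by
bijections between the sets of factorizations. The goal is a bijection `f` with
`a (x - y) = b (f x - f y)`.

Two classical tools carry the proof. Schur's theorem on multipliers (`Matched.mult`): `a x = b y`
implies `a (m • x) = b (m • y)` for `m` prime to `p`, obtained from Frobenius in the group algebra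
modulo the prime factors of `m`. And the subgroup generated by a class is matched with itself
(`Matched.closure_class`), where subgroups of a cyclic `p`-group form a chain and are determined by
their order.

*Trivial radical* (`eq_of_trivial_rad`). If `a` and `b` agree at a generator `g` whose class `X` has
trivial radical, then `a = b`. By Schur's theorem they agree at all generators.
If `X` contains no `g + t` with `t ≠ 0` of order `p` (`eq_of_case1`), the multipliers fixing `X` that
are congruent to `1` modulo `p` (modulo `4` if `p = 2`) are trivial, the subgroups `pG`
and `4G` are matched by Frobenius modulo `p`, and a non-generator `y` is recovered from the
factorization of the generator `g + y` as `y + g`.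
Otherwise (`eq_of_case2`) let `E₀` be the smallest nontrivial matched subgroup. All its nonzero
elements have conjugate classes, and counting translates of `X` gives that `X` meets each
of the cosets `y + E₀`, `y ∈ X`, in more than half of its elements (`card_lt_two_mul`). If
`E₀ ≠ G`, the trace of `X` on `g + E₀` and the trace of a conjugate class cannot both be that large,
so `E₀` lies in the radical, a contradiction; if `E₀ = G`, all nonzero elements have one colour.

*Reduction modulo the radical* (`exists_rad_agree`). Passing to `G ⧸ L`, with `L` the radical of the
class of `g`, matched colourings which agree at `g` agree up to `L`.

*Gluing* (`hasIso`). By induction on `|G|` there is an `f` congruent modulo `L` to multiplication by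
`M`, whenever multiplication by `M` matches the colours modulo the matched subgroup `L`. With `U` a
maximal proper matched subgroup, every class outside `U` is conjugate to that of `g`, so it is a
union of cosets of the radical `K` of the latter. If `K ≤ L`, then `L` and `M` are first replaced by
`K` and a suitable multiplier. If `L ≤ K`, the map for `U` is
extended to the cosets of `U` through coset representatives. The theorem is the case `L = G`,
`M = 1`.
-/

open scoped Pointwise

namespace SRingPaper

/-- The number of representations of `z` as `x * y` with `x ∈ X`, `y ∈ Y`
(the structure constant `c^Z_{X,Y}` evaluated at `z ∈ Z`). -/
noncomputable def structConst {G : Type*} [Group G] (X Y : Set G) (z : G) : ℕ :=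
  Nat.card {p : G × G // p.1 ∈ X ∧ p.2 ∈ Y ∧ p.1 * p.2 = z}

/-- An S-ring (Schur ring) over a finite group `G`, given by its partition of `G`
into basic sets: the partition contains `{1}`, is closed under taking inverses,
and the structure constants are constant on each class (equivalently, the
ℤ-span of the indicator elements of the classes is a subring of ℤG). -/
structure SRing (G : Type*) [Group G] [Finite G] where
  parts : Set (Set G)
  nonempty_mem : ∀ X ∈ parts, X.Nonempty
  exists_mem : ∀ g : G, ∃ X ∈ parts, g ∈ X
  eq_of_mem : ∀ X ∈ parts, ∀ Y ∈ parts, ∀ g : G, g ∈ X → g ∈ Y → X = Y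
  one_mem : ({1} : Set G) ∈ parts
  inv_mem : ∀ X ∈ parts, X⁻¹ ∈ parts
  structConst_const : ∀ X ∈ parts, ∀ Y ∈ parts, ∀ Z ∈ parts, ∀ z ∈ Z, ∀ z' ∈ Z,
    structConst X Y z = structConst X Y z'

/-- `R(X) = {(g, x*g) : x ∈ X, g ∈ G}`, the edge set of the Cayley graph `Cay(G,X)`. -/
def RSet {G : Type*} [Group G] (X : Set G) : Set (G × G) :=
  {p | ∃ x ∈ X, p.2 = x * p.1}

/-- The image of a binary relation under a map applied to both coordinates. -/
def mapRel {G G' : Type*} (f : G → G') (R : Set (G × G)) : Set (G' × G') :=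
  (fun p : G × G => (f p.1, f p.2)) '' R

section Defs

variable {G G' : Type*} [Group G] [Finite G] [Group G'] [Finite G']

/-- A combinatorial isomorphism from the S-ring `A` to the S-ring `B`. -/
structure IsIso (A : SRing G) (B : SRing G') (f : G → G') : Prop where
  bijective : Function.Bijective f
  image_eq : (fun X : Set G => mapRel f (RSet X)) '' A.parts = RSet '' B.parts

/-- An algebraic isomorphism from the S-ring `A` to the S-ring `B`:
a bijection between the basic sets preserving all structure constants. -/
structure IsAlgIso (A : SRing G) (B : SRing G') (φ : Set G → Set G') : Prop where
  bijOn : Set.BijOn φ A.parts B.parts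
  structConst_eq : ∀ X ∈ A.parts, ∀ Y ∈ A.parts, ∀ Z ∈ A.parts,
    ∀ z ∈ Z, ∀ z' ∈ φ Z, structConst X Y z = structConst (φ X) (φ Y) z'

/-- The algebraic isomorphism `φ` is induced by the combinatorial isomorphism `f`
(i.e. `φ = φ_f`). -/
def InducedBy (A : SRing G) (φ : Set G → Set G') (f : G → G') : Prop :=
  Function.Bijective f ∧ ∀ X ∈ A.parts, mapRel f (RSet X) = RSet (φ X)

/-- `A` is separable with respect to the class `𝒦_A` of finite abelian groups. -/
def SepAbelian (A : SRing G) : Prop :=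
  ∀ (H : Type*) [CommGroup H] [Finite H] (B : SRing H) (φ : Set G → Set H),
    IsAlgIso A B φ → ∃ f : G → H, InducedBy A φ f

/-- `A` is separable with respect to the class `𝒦_C` of finite cyclic groups. -/
def SepCyclic (A : SRing G) : Prop :=
  ∀ (H : Type*) [Group H] [Finite H], IsCyclic H → ∀ (B : SRing H) (φ : Set G → Set H),
    IsAlgIso A B φ → ∃ f : G → H, InducedBy A φ f

/-- `A` is schurian: `A = V(K, G)` for some group `K` with `G_right ≤ K ≤ Sym(G)`,
i.e. the basic sets of `A` are the orbits on `G` of the stabilizer of `1` in `K`. -/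
def IsSchurian (A : SRing G) : Prop :=
  ∃ K : Subgroup (Equiv.Perm G),
    (∀ g : G, Equiv.mulRight g ∈ K) ∧
    A.parts = {X : Set G | ∃ g : G, X = {h : G | ∃ f ∈ K, f 1 = 1 ∧ f g = h}}

lemma mapRel_comp {A B C : Type*} (f : B → C) (g : A → B) (R : Set (A × A)) :
    mapRel (f ∘ g) R = mapRel f (mapRel g R) := by
  simp only [mapRel, Set.image_image]
  rfl

lemma mapRel_id {A : Type*} (R : Set (A × A)) : mapRel (fun x => x) R = R := by
  simp [mapRel]

/-- The automorphism group `Aut(A)` of an S-ring, as a subgroup of `Sym(G)`. -/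
def autSubgroup (A : SRing G) : Subgroup (Equiv.Perm G) where
  carrier := {f : Equiv.Perm G | ∀ X ∈ A.parts, mapRel f (RSet X) = RSet X}
  one_mem' := by
    intro X hX
    have h : ⇑(1 : Equiv.Perm G) = fun x => x := rfl
    rw [h, mapRel_id]
  mul_mem' := by
    intro f g hf hg X hX
    have h : ⇑(f * g) = ⇑f ∘ ⇑g := rfl
    rw [h, mapRel_comp, hg X hX, hf X hX]
  inv_mem' := by
    intro f hf X hX
    conv_lhs => rw [← hf X hX]
    rw [← mapRel_comp]
    have h : ⇑f⁻¹ ∘ ⇑f = fun x => x := by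
      funext x
      simp
    rw [h, mapRel_id]

/-- `A` is a normal S-ring: `G_right` is normal in `Aut(A)`. -/
def IsNormalSRing (A : SRing G) : Prop :=
  ∀ f ∈ autSubgroup A, ∀ g : G,
    ∃ g' : G, f * (Equiv.mulRight g : Equiv.Perm G) * f⁻¹ = Equiv.mulRight g'

/-- The partition of `G` into the orbits of `K ≤ Aut(G)`: the basic sets of the
cyclotomic S-ring `cyc(K, G)`. -/
def cycParts (K : Subgroup (MulAut G)) : Set (Set G) :=
  {X : Set G | ∃ g : G, X = {h : G | ∃ f ∈ K, f g = h}}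

/-- `H` is an `A`-subgroup: `H` is a union of basic sets of `A`. -/
def IsASubgroup (A : SRing G) (H : Subgroup G) : Prop :=
  ∀ X ∈ A.parts, X ⊆ (H : Set G) ∨ Disjoint X (H : Set G)

/-- `rad(X) = {g ∈ G : gX = Xg = X}`. -/
def radSet (X : Set G) : Set G :=
  {g : G | (fun x => g * x) '' X = X ∧ (fun x => x * g) '' X = X}

/-- A subset of a cyclic group is highest if it contains a generator. -/
def IsHighest (X : Set G) : Prop :=
  ∃ x ∈ X, ∀ g : G, g ∈ Subgroup.zpowers x

/-- `A` is the `S`-wreath product with respect to the section `S = U/L`: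
`U` and `L` are `A`-subgroups, `L ≤ U`, `L` is normal in `G`, and every basic
set outside `U` has `L` in its radical. -/
def IsSWreath (A : SRing G) (U L : Subgroup G) : Prop :=
  IsASubgroup A U ∧ IsASubgroup A L ∧ L ≤ U ∧ L.Normal ∧
    ∀ X ∈ A.parts, ¬ X ⊆ (U : Set G) → (L : Set G) ⊆ radSet X

/-- `AU` is the restriction `A_U` of `A` to the `A`-subgroup `U`. -/
def IsRestriction (A : SRing G) (U : Subgroup G) (AU : SRing ↥U) : Prop :=
  AU.parts = {Y : Set ↥U | ∃ X ∈ A.parts, X ⊆ (U : Set G) ∧ Y = (Subtype.val ⁻¹' X : Set ↥U)}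

/-- `AQ` is the quotient S-ring `A_{G/L}`. -/
def IsQuotientSRing (A : SRing G) (L : Subgroup G) [L.Normal] (AQ : SRing (G ⧸ L)) : Prop :=
  AQ.parts = {Y : Set (G ⧸ L) | ∃ X ∈ A.parts, Y = ((QuotientGroup.mk : G → G ⧸ L) '' X)}

/-- The orbit of a pair under a permutation group, for the definition of 2-equivalence. -/
def orb2 {Ω : Type*} (K : Subgroup (Equiv.Perm Ω)) (p : Ω × Ω) : Set (Ω × Ω) :=
  {q : Ω × Ω | ∃ f ∈ K, (f p.1, f p.2) = q}

/-- Two permutation groups are 2-equivalent if they have the same orbits on `Ω × Ω`. -/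
def TwoEquiv {Ω : Type*} (K K' : Subgroup (Equiv.Perm Ω)) : Prop :=
  {S : Set (Ω × Ω) | ∃ p, S = orb2 K p} = {S : Set (Ω × Ω) | ∃ p, S = orb2 K' p}

/-- A permutation group is 2-isolated if it is the only group 2-equivalent to it. -/
def TwoIsolated {Ω : Type*} (K : Subgroup (Equiv.Perm Ω)) : Prop :=
  ∀ K' : Subgroup (Equiv.Perm Ω), TwoEquiv K K' → K' = K

end Defs

/-- `Aut(A)^S` for the section `S = G/N`: the permutations of `G/N` induced by
automorphisms of `A` permuting the `N`-cosets. -/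
def inducedOnQuotient {G : Type*} [Group G] [Finite G] (A : SRing G) (N : Subgroup G)
    [N.Normal] : Set ((G ⧸ N) → (G ⧸ N)) :=
  {q : (G ⧸ N) → (G ⧸ N) | ∃ f : Equiv.Perm G, f ∈ autSubgroup A ∧
    (∀ u v : G, (u : G ⧸ N) = (v : G ⧸ N) → ((f u : G) : G ⧸ N) = ((f v : G) : G ⧸ N)) ∧
    ∀ u : G, q (u : G ⧸ N) = ((f u : G) : G ⧸ N)}

end SRingPaper

namespace CyclicSep

set_option linter.unusedSectionVars false

/-! ### Matched colourings -/

section Basic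

variable {G ι : Type*} [AddCommGroup G]

/-- The colourings `a` and `b` of `G` encode two S-rings together with an algebraic isomorphism
between them: the basic sets are the colour classes, and classes of the same colour correspond to
each other. The first three fields say that `{0}` is a class of both and corresponds to itself. The
field `conv` says that, for `x` and `y` of the same colour, `u ↦ σ u` takes the factorizations
`x = u + (x - u)` to the factorizations `y = v + (y - v)` preserving the colours of both summands;
this is equality of structure constants. -/
structure Matched (a b : G → ι) : Prop where
  zero : a 0 = b 0
  left : ∀ x, a x = b 0 → x = 0
  right : ∀ y, a 0 = b y → y = 0
  conv : ∀ x y, a x = b y →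
    ∃ σ : Equiv.Perm G, ∀ u, a u = b (σ u) ∧ a (x - u) = b (y - σ u)

variable {a b c : G → ι}

namespace Matched

lemma symm (h : Matched a b) : Matched b a where
  zero := h.zero.symm
  left y hy := h.right y hy.symm
  right x hx := h.left x hx.symm
  conv y x hyx := by
    obtain ⟨σ, hσ⟩ := h.conv x y hyx.symm
    refine ⟨σ.symm, fun u => ?_⟩
    have := hσ (σ.symm u)
    rw [Equiv.apply_symm_apply] at this
    exact ⟨this.1.symm, this.2.symm⟩

lemma exists_right (h : Matched a b) (x : G) : ∃ y, a x = b y := by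
  obtain ⟨σ, hσ⟩ := h.conv 0 0 h.zero
  exact ⟨σ x, (hσ x).1⟩

lemma exists_left (h : Matched a b) (y : G) : ∃ x, a x = b y := by
  obtain ⟨x, hx⟩ := h.symm.exists_right y
  exact ⟨x, hx.symm⟩

lemma trans (h : Matched a b) (h' : Matched b c) : Matched a c where
  zero := h.zero.trans h'.zero
  left x hx := h.left x (hx.trans h'.zero.symm)
  right y hy := h'.right y (h.zero.symm.trans hy)
  conv x z hxz := by
    obtain ⟨y, hy⟩ := h.exists_right x
    obtain ⟨σ, hσ⟩ := h.conv x y hy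
    obtain ⟨τ, hτ⟩ := h'.conv y z (hy.symm.trans hxz)
    exact ⟨σ.trans τ, fun u => ⟨(hσ u).1.trans (hτ (σ u)).1, (hσ u).2.trans (hτ (σ u)).2⟩⟩

lemma self (h : Matched a b) : Matched a a := h.trans h.symm

lemma zero_iff (h : Matched a b) {x y : G} (hxy : a x = b y) : x = 0 ↔ y = 0 := by
  constructor
  · rintro rfl; exact h.right y hxy
  · rintro rfl; exact h.left x hxy

/-- The function `F` is constant on the classes of `a`, the function `F'` is constant on the
classes of `b`, and they take the same value on corresponding classes. For predicates this means
that `F` and `F'` define corresponding unions of classes. -/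
def Corr {α : Type*} (a b : G → ι) (F F' : G → α) : Prop :=
  ∀ x y, a x = b y → F x = F' y

open scoped Classical in
lemma corr_pow [Finite G] (h : Matched a b) {R : Type*} [CommRing R] (F F' : AddMonoidAlgebra R G)
    (hF : Corr a b F.coeff F'.coeff) (k : ℕ) :
    Corr a b (F ^ k).coeff (F' ^ k).coeff := by
  induction k with
  | zero =>
    intro x y hxy
    simp only [pow_zero, AddMonoidAlgebra.one_def, AddMonoidAlgebra.coeff_single,
      Finsupp.single_apply]
    have := h.zero_iff hxy
    by_cases hx : x = 0
    · simp [hx, this.1 hx]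
    · simp [Ne.symm hx, Ne.symm (fun hy => hx (this.2 hy))]
  | succ k ih =>
    have := Fintype.ofFinite G
    intro x y hxy
    obtain ⟨σ, hσ⟩ := h.conv x y hxy
    rw [pow_succ', pow_succ', AddMonoidAlgebra.coeff_mul_apply_left,
      AddMonoidAlgebra.coeff_mul_apply_left, Finsupp.sum_fintype _ _ (by simp),
      Finsupp.sum_fintype _ _ (by simp)]
    refine Fintype.sum_equiv σ _ _ fun u => ?_
    rw [hF u (σ u) (hσ u).1, neg_add_eq_sub, neg_add_eq_sub, ih _ _ (hσ u).2]

open scoped Classical in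
/-- Frobenius in the group algebra over `ZMod q`: the `q`-th power of `∑ u, F u • u` is
`∑ u, F u • (q • u)`, so its coefficients correspond whenever those of `F` and `F'` do. -/
lemma corr_frob (h : Matched a b) (q : ℕ) [hq : Fact q.Prime] [Fintype G] (F F' : G → ZMod q)
    (hF : Corr a b F F') :
    Corr a b (fun x => ∑ u with q • u = x, F u) (fun x => ∑ u with q • u = x, F' u) := by
  have key : ∀ F : G → ZMod q, ∀ x,
      ((AddMonoidAlgebra.ofCoeff (Finsupp.equivFunOnFinite.symm F)) ^ q).coeff x =
        ∑ u with q • u = x, F u := by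
    intro F x
    have : CharP (AddMonoidAlgebra (ZMod q) G) q :=
      charP_of_injective_algebraMap (FaithfulSMul.algebraMap_injective (ZMod q) _) q
    have e : AddMonoidAlgebra.ofCoeff (Finsupp.equivFunOnFinite.symm F) =
        ∑ u, AddMonoidAlgebra.single u (F u) := by
      ext v
      simp [AddMonoidAlgebra.coeff_sum, Finsupp.single_apply]
    rw [e, sum_pow_char, AddMonoidAlgebra.coeff_sum, Finsupp.finsetSum_apply, Finset.sum_filter]
    refine Finset.sum_congr rfl fun u _ => ?_
    simp [AddMonoidAlgebra.single_pow, Finsupp.single_apply, ZMod.pow_card]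
  intro x y hxy
  have := corr_pow h (AddMonoidAlgebra.ofCoeff (Finsupp.equivFunOnFinite.symm F))
    (AddMonoidAlgebra.ofCoeff (Finsupp.equivFunOnFinite.symm F')) (fun x y hxy => hF x y hxy) q
    x y hxy
  rw [key, key] at this
  exact this

/-- Corresponding unions of classes generate corresponding subgroups. -/
lemma closure (h : Matched a b) (hneg : ∀ x y, a x = b y → a (-x) = b (-y)) {S S' : Set G}
    (hS : Corr a b (· ∈ S) (· ∈ S')) :
    Corr a b (· ∈ AddSubgroup.closure S) (· ∈ AddSubgroup.closure S') := by
  have key : ∀ {a b : G → ι} {S S' : Set G}, Matched a b → (∀ x y, a x = b y → a (-x) = b (-y)) →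
      Corr a b (· ∈ S) (· ∈ S') → ∀ x ∈ AddSubgroup.closure S, ∀ y, a x = b y →
      y ∈ AddSubgroup.closure S' := by
    intro a b S S' h hneg hS x hx
    induction hx using AddSubgroup.closure_induction with
    | mem x hx =>
      intro y hxy
      exact AddSubgroup.subset_closure ((hS x y hxy).mp hx)
    | zero =>
      intro y hy
      rw [h.right y hy]; exact zero_mem _
    | add x₁ x₂ _ _ h₁ h₂ =>
      intro y hy
      obtain ⟨σ, hσ⟩ := h.conv _ y hy
      have e := (hσ x₁).2
      rw [add_sub_cancel_left] at e
      have := add_mem (h₁ _ (hσ x₁).1) (h₂ _ e)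
      rwa [add_sub_cancel] at this
    | neg x _ hx =>
      intro y hy
      have e := hneg _ _ hy
      rw [neg_neg] at e
      simpa using neg_mem (hx _ e)
  intro x y hxy
  refine propext ⟨fun hx => key h hneg hS x hx y hxy, fun hy => ?_⟩
  refine key h.symm (fun x y e => (hneg y x e.symm).symm) ?_ y hy x hxy.symm
  intro x y e
  exact (hS y x e.symm).symm

lemma card_eq (h : Matched a b) {S S' : Set G} (hS : Corr a b (· ∈ S) (· ∈ S')) :
    Nat.card S = Nat.card S' := by
  obtain ⟨σ, hσ⟩ := h.conv 0 0 h.zero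
  exact Nat.card_congr (σ.subtypeEquiv fun u => iff_of_eq (hS u (σ u) (hσ u).1))

end Matched
end Basic

/-! ### Generators, multipliers and subgroups of cyclic `p`-groups -/

section Cyclic

variable {G : Type*} [AddCommGroup G]

/-- `g` generates `G`. -/
def Gen (g : G) : Prop := ∀ y, ∃ k : ℤ, y = k • g

variable {p n : ℕ} [hp : Fact p.Prime] [Finite G]

lemma exists_gen [IsAddCyclic G] : ∃ g : G, Gen g := by
  obtain ⟨g, hg⟩ := IsAddCyclic.exists_generator (α := G)
  refine ⟨g, fun y => ?_⟩
  obtain ⟨k, hk⟩ := AddSubgroup.mem_zmultiples_iff.1 (hg y)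
  exact ⟨k, hk.symm⟩

lemma Gen.addOrderOf_eq (hG : Nat.card G = p ^ n) {g : G} (hg : Gen g) : addOrderOf g = p ^ n := by
  rw [← hG]
  refine addOrderOf_eq_card_of_forall_mem_zmultiples fun x => ?_
  obtain ⟨k, hk⟩ := hg x
  exact AddSubgroup.mem_zmultiples_iff.2 ⟨k, hk.symm⟩

lemma Gen.smul_eq_zero_iff (hG : Nat.card G = p ^ n) {g : G} (hg : Gen g) (k : ℤ) :
    k • g = 0 ↔ (p : ℤ) ^ n ∣ k := by
  rw [← addOrderOf_dvd_iff_zsmul_eq_zero, hg.addOrderOf_eq hG]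
  push_cast
  rfl

lemma pow_smul_eq_zero (hG : Nat.card G = p ^ n) (x : G) : ((p : ℤ) ^ n) • x = 0 := by
  have := card_nsmul_eq_zero' (x := x)
  rw [hG] at this
  rw [← this, ← natCast_zsmul]
  push_cast
  rfl

/-- Multiplication by an integer prime to `p` is invertible on a finite abelian `p`-group. -/
lemma exists_inv (hG : Nat.card G = p ^ n) {m : ℤ} (hm : ¬ (p : ℤ) ∣ m) :
    ∃ m' : ℤ, ¬ (p : ℤ) ∣ m' ∧ (∀ x : G, m' • m • x = x) ∧ ∀ x : G, m • m' • x = x := by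
  have hpr : Prime (p : ℤ) := Nat.prime_iff_prime_int.1 hp.out
  have hc : IsCoprime ((p : ℤ) ^ (n + 1)) m := by
    apply IsCoprime.pow_left
    exact (Prime.coprime_iff_not_dvd hpr).2 hm
  obtain ⟨u, v, huv⟩ := hc
  have key : ∀ x : G, (v * m) • x = x := by
    intro x
    have : (u * (p : ℤ) ^ (n + 1) + v * m) • x = x := by rw [huv, one_smul]
    rw [add_smul, pow_succ, mul_comm ((p : ℤ) ^ n), ← mul_assoc, mul_smul,
      pow_smul_eq_zero hG, smul_zero, zero_add] at this
    exact this
  refine ⟨v, ?_, fun x => ?_, fun x => ?_⟩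
  · intro hv
    apply hpr.not_dvd_one
    rw [← huv]
    exact dvd_add (Dvd.dvd.mul_left (dvd_pow_self _ (Nat.succ_ne_zero n)) _) (Dvd.dvd.mul_right hv _)
  · rw [smul_smul, key]
  · rw [smul_smul, mul_comm, key]

lemma Gen.smul (hG : Nat.card G = p ^ n) {g : G} (hg : Gen g) {m : ℤ} (hm : ¬ (p : ℤ) ∣ m) :
    Gen (m • g) := by
  obtain ⟨m', -, -, h⟩ := exists_inv (G := G) hG hm
  intro y
  obtain ⟨k, rfl⟩ := hg y
  exact ⟨k * m', by rw [mul_smul, smul_comm m', h]⟩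

lemma Gen.not_dvd (hG : Nat.card G = p ^ n) (hn : n ≠ 0) {g : G} (hg : Gen g) {m : ℤ}
    (hm : Gen (m • g)) : ¬ (p : ℤ) ∣ m := by
  have hpr : Prime (p : ℤ) := Nat.prime_iff_prime_int.1 hp.out
  intro hd
  obtain ⟨k, hk⟩ := hm g
  have : (k * m - 1) • g = 0 := by rw [sub_smul, mul_smul, ← hk, one_smul, sub_self]
  rw [hg.smul_eq_zero_iff hG] at this
  apply hpr.not_dvd_one
  have h1 := (dvd_pow_self (p : ℤ) hn).trans this
  have h2 : (p : ℤ) ∣ k * m := hd.mul_left k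
  have := dvd_sub h2 h1
  simpa using this

lemma Gen.exists_unit (hG : Nat.card G = p ^ n) {g h : G} (hg : Gen g) (hh : Gen h) :
    ∃ m : ℤ, ¬ (p : ℤ) ∣ m ∧ h = m • g := by
  have hpr : Prime (p : ℤ) := Nat.prime_iff_prime_int.1 hp.out
  obtain ⟨m, rfl⟩ := hg h
  rcases eq_or_ne n 0 with rfl | hn
  · refine ⟨1, hpr.not_dvd_one, ?_⟩
    have h1 := pow_smul_eq_zero hG (m • g)
    have h2 := pow_smul_eq_zero hG g
    simp only [pow_zero, one_smul] at h1 h2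
    rw [h1, h2, smul_zero]
  · exact ⟨m, hg.not_dvd hG hn hh, rfl⟩

/-- The subgroup of multiples of `p ^ k`. -/
def mulSub (p k : ℕ) (G : Type*) [AddCommGroup G] : AddSubgroup G :=
  (zsmulAddGroupHom ((p : ℤ) ^ k)).range

lemma mem_mulSub {k : ℕ} {x : G} : x ∈ mulSub p k G ↔ ∃ y : G, x = ((p : ℤ) ^ k) • y := by
  simp only [mulSub, AddMonoidHom.mem_range, zsmulAddGroupHom_apply, eq_comm]

lemma Gen.smul_mem_mulSub (hG : Nat.card G = p ^ n) {g : G} (hg : Gen g) {k : ℕ} (hk : k ≤ n)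
    {m : ℤ} : m • g ∈ mulSub p k G ↔ (p : ℤ) ^ k ∣ m := by
  rw [mem_mulSub]
  constructor
  · rintro ⟨y, hy⟩
    obtain ⟨l, rfl⟩ := hg y
    have : (m - (p : ℤ) ^ k * l) • g = 0 := by rw [sub_smul, hy, mul_smul, sub_self]
    rw [hg.smul_eq_zero_iff hG] at this
    have h1 := (pow_dvd_pow (p : ℤ) hk).trans this
    exact (dvd_sub_left (dvd_mul_right _ _)).1 h1
  · rintro ⟨l, rfl⟩
    exact ⟨l • g, by rw [mul_smul]⟩

lemma gen_iff [IsAddCyclic G] (hG : Nat.card G = p ^ n) (hn : n ≠ 0) {x : G} :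
    Gen x ↔ x ∉ mulSub p 1 G := by
  obtain ⟨g, hg⟩ := exists_gen (G := G)
  obtain ⟨k, rfl⟩ := hg x
  rw [hg.smul_mem_mulSub hG (Nat.one_le_iff_ne_zero.2 hn), pow_one]
  exact ⟨hg.not_dvd hG hn, hg.smul hG⟩

lemma Gen.add (hG : Nat.card G = p ^ n) [IsAddCyclic G] (hn : n ≠ 0) {g t : G} (hg : Gen g)
    (ht : ¬ Gen t) : Gen (g + t) := by
  rw [gen_iff hG hn] at *
  rw [not_not] at ht
  rwa [AddSubgroup.add_mem_cancel_right _ ht]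

/-- A subgroup of a cyclic group consists of the elements killed by its order. -/
lemma mem_iff_card_smul [IsAddCyclic G] (U : AddSubgroup G) (x : G) :
    x ∈ U ↔ Nat.card U • x = 0 := by
  classical
  have := Fintype.ofFinite G
  have hle : ((U : Set G).toFinset) ⊆ Finset.univ.filter fun x : G => Nat.card U • x = 0 := by
    intro x hx
    simp only [Set.mem_toFinset, SetLike.mem_coe] at hx
    simp only [Finset.mem_filter, Finset.mem_univ, true_and]
    have := card_nsmul_eq_zero' (x := (⟨x, hx⟩ : U))
    exact congrArg Subtype.val this
  have hcard : (Finset.univ.filter fun x : G => Nat.card U • x = 0).card ≤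
      ((U : Set G).toFinset).card := by
    refine (IsAddCyclic.card_nsmul_eq_zero_le Nat.card_pos).trans (le_of_eq ?_)
    rw [Set.toFinset_card, Nat.card_eq_fintype_card]
    rfl
  have := Finset.eq_of_subset_of_card_le hle hcard
  have := Finset.ext_iff.1 this x
  simpa using this

lemma eq_of_card_eq [IsAddCyclic G] {U V : AddSubgroup G} (h : Nat.card U = Nat.card V) :
    U = V := by
  ext x
  rw [mem_iff_card_smul, mem_iff_card_smul, h]

/-- The subgroups of a cyclic `p`-group form a chain. -/
lemma le_total_sub [IsAddCyclic G] (hG : Nat.card G = p ^ n) (U V : AddSubgroup G) :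
    U ≤ V ∨ V ≤ U := by
  obtain ⟨i, -, hi⟩ := (Nat.dvd_prime_pow hp.out).1 (hG ▸ AddSubgroup.card_addSubgroup_dvd_card U)
  obtain ⟨j, -, hj⟩ := (Nat.dvd_prime_pow hp.out).1 (hG ▸ AddSubgroup.card_addSubgroup_dvd_card V)
  have key : ∀ U V : AddSubgroup G, ∀ i j, Nat.card U = p ^ i → Nat.card V = p ^ j → i ≤ j →
      U ≤ V := by
    intro U V i j hi hj hij x hx
    rw [mem_iff_card_smul, hi] at hx
    obtain ⟨c, rfl⟩ := Nat.exists_eq_add_of_le' hij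
    rw [mem_iff_card_smul, hj, pow_add, mul_smul, hx, smul_zero]
  rcases le_total i j with h | h
  · exact Or.inl (key _ _ _ _ hi hj h)
  · exact Or.inr (key _ _ _ _ hj hi h)

/-- A proper subgroup contains no generator. -/
lemma Gen.not_mem {g : G} (hg : Gen g) {U : AddSubgroup G} (hU : U ≠ ⊤) : g ∉ U := by
  intro h
  apply hU
  rw [eq_top_iff]
  intro x _
  obtain ⟨k, rfl⟩ := hg x
  exact zsmul_mem h k

end Cyclic

section Mult
variable {G ι : Type*} [AddCommGroup G] [Finite G] {p n : ℕ} [hp : Fact p.Prime] {a b : G → ι}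

namespace Matched

/-- Schur's theorem on multipliers. -/
lemma mult (h : Matched a b) (hG : Nat.card G = p ^ n) {m : ℤ} (hm : ¬ (p : ℤ) ∣ m) {x y : G}
    (hxy : a x = b y) : a (m • x) = b (m • y) := by
  classical
  have := Fintype.ofFinite G
  have key : ∀ k : ℕ, ¬ p ∣ k → ∀ x y : G, a (k • x) = b (k • y) → a x = b y := by
    intro k
    induction k using induction_on_primes with
    | zero => intro h; exact absurd (dvd_zero p) h
    | one => intro _ x y; simp
    | prime_mul q k hq ih =>
      intro hk x y hxy
      refine ih (fun h => hk (h.mul_left q)) x y ?_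
      rw [mul_smul, mul_smul] at hxy
      generalize k • x = x at hxy ⊢
      generalize k • y = y at hxy ⊢
      have hqp : ¬ (p : ℤ) ∣ (q : ℤ) := by
        intro h
        exact hk ((Int.natCast_dvd_natCast.1 h).mul_right k)
      obtain ⟨q', -, h1, -⟩ := exists_inv (G := G) hG hqp
      have inj : ∀ u x : G, q • u = q • x ↔ u = x := by
        intro u x
        refine ⟨fun h => ?_, fun h => h ▸ rfl⟩
        rw [← h1 u, ← h1 x, natCast_zsmul, natCast_zsmul, h]
      have : Fact q.Prime := ⟨hq⟩
      have hF := h.corr_frob q (fun u => if a u = a x then 1 else 0)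
        (fun u => if b u = a x then 1 else 0) (fun u v huv => by simp only [huv]) _ _ hxy
      have e : ∀ (F : G → ZMod q) (x : G), ∑ u with q • u = q • x, F u = F x := by
        intro F x
        rw [Finset.sum_filter, Finset.sum_eq_single x]
        · simp
        · intro u _ hu
          exact if_neg fun h => hu ((inj u x).1 h)
        · simp
      simp only [e, if_true] at hF
      by_contra hne
      rw [if_neg (Ne.symm hne)] at hF
      exact one_ne_zero hF
  obtain ⟨m', hm', h1, h2⟩ := exists_inv (G := G) hG hm
  -- a nonnegative representative of `m'`
  obtain ⟨k, hk⟩ : ∃ k : ℕ, (k : ℤ) = m' % (p : ℤ) ^ (n + 1) := by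
    refine ⟨(m' % (p : ℤ) ^ (n + 1)).toNat, Int.toNat_of_nonneg (Int.emod_nonneg _ ?_)⟩
    exact pow_ne_zero _ (by exact_mod_cast hp.out.ne_zero)
  have hk' : m' = k + (p : ℤ) ^ (n + 1) * (m' / (p : ℤ) ^ (n + 1)) := by
    rw [hk, Int.emod_add_mul_ediv]
  have hkx : ∀ x : G, k • x = m' • x := by
    intro x
    conv_rhs => rw [hk', add_smul, pow_succ, mul_assoc, mul_smul, pow_smul_eq_zero hG, add_zero]
    rw [natCast_zsmul]
  refine key k ?_ _ _ ?_
  · intro hd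
    apply hm'
    rw [hk']
    exact dvd_add (Int.natCast_dvd_natCast.2 hd)
      (Dvd.dvd.mul_right (dvd_pow_self _ (Nat.succ_ne_zero n)) _)
  · rw [hkx, hkx, h1, h1, hxy]

lemma mult_iff (h : Matched a b) (hG : Nat.card G = p ^ n) {m : ℤ} (hm : ¬ (p : ℤ) ∣ m) {x y : G} :
    a (m • x) = b (m • y) ↔ a x = b y := by
  refine ⟨fun hxy => ?_, h.mult hG hm⟩
  obtain ⟨m', hm', h1, -⟩ := exists_inv (G := G) hG hm
  have := h.mult hG hm' hxy
  rwa [h1, h1] at this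

lemma neg (h : Matched a b) (hG : Nat.card G = p ^ n) {x y : G}
    (hxy : a x = b y) : a (-x) = b (-y) := by
  have hpr : Prime (p : ℤ) := Nat.prime_iff_prime_int.1 hp.out
  have := h.mult hG (m := -1) (fun hd => hpr.not_dvd_one ((dvd_neg).1 hd)) hxy
  simpa using this

/-- Composing one of the colourings with a multiplier preserves matching. -/
lemma comp_mult (h : Matched a b) (hG : Nat.card G = p ^ n) {m : ℤ} (hm : ¬ (p : ℤ) ∣ m) :
    Matched a (fun x => b (m • x)) := by
  obtain ⟨m', hm', h1, h2⟩ := exists_inv (G := G) hG hm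
  refine ⟨by simp [h.zero], fun x hx => h.left x (by simpa using hx), fun y hy => ?_, ?_⟩
  · have := h.right _ hy
    rw [← h1 y, this, smul_zero]
  · intro x y hxy
    obtain ⟨σ, hσ⟩ := h.conv x _ hxy
    let τ : Equiv.Perm G := ⟨fun x => m' • x, fun x => m • x, h2, h1⟩
    refine ⟨σ.trans τ, fun u => ?_⟩
    have : (σ.trans τ) u = m' • σ u := rfl
    simp only [this, smul_sub, h2]
    exact hσ u

/-- Corresponding subgroups coincide, since they have the same order. -/
lemma sub_eq [IsAddCyclic G] (h : Matched a b) {U V : AddSubgroup G}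
    (hUV : Corr a b (· ∈ U) (· ∈ V)) : U = V :=
  eq_of_card_eq (h.card_eq (S := U) (S' := V) hUV)

/-- The subgroup generated by the class of `a` of colour `i` is a union of classes of both
colourings and corresponds to itself. -/
lemma closure_class [IsAddCyclic G] (h : Matched a b) (hG : Nat.card G = p ^ n) (i : ι) :
    Corr a b (· ∈ AddSubgroup.closure {x | a x = i}) (· ∈ AddSubgroup.closure {x | a x = i}) := by
  have h1 := h.closure (fun x y e => h.neg hG e) (S := {x | a x = i}) (S' := {x | b x = i})
    (fun x y e => by simp only [Set.mem_ofPred_eq, e])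
  have h2 := h.sub_eq h1
  rw [← h2] at h1
  exact h1

end Matched
end Mult

/-! ### Trivial radical, first case: a generator class meets cosets of the socle at most once -/

section Case1
variable {G ι : Type*} [AddCommGroup G] [Finite G] [IsAddCyclic G] {p n : ℕ} [hp : Fact p.Prime]
  {a b : G → ι}

lemma not_gen_of_smul_eq_zero (hG : Nat.card G = p ^ n) (hn : 2 ≤ n) {t : G}
    (ht : (p : ℤ) • t = 0) : ¬ Gen t := by
  intro h
  rw [h.smul_eq_zero_iff hG] at ht
  have h1 : (p : ℤ) ^ n ∣ p ^ 1 := by simpa using ht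
  have := (pow_dvd_pow_iff (by exact_mod_cast hp.out.ne_zero)
    (Nat.prime_iff_prime_int.1 hp.out).not_isUnit).1 h1
  omega

/-- Lifting the exponent along `p`-th powers. -/
lemma exists_pow_exact {s : ℤ} {c : ℕ} (hc : emultiplicity (p : ℤ) (s - 1) = c)
    (h1 : (p : ℤ) ∣ s - 1) (h2 : p = 2 → 4 ∣ s - 1) (k : ℕ) :
    emultiplicity (p : ℤ) (s ^ p ^ k - 1) = (c + k : ℕ) := by
  have hpr : Prime (p : ℤ) := Nat.prime_iff_prime_int.1 hp.out
  have hs : ¬ (p : ℤ) ∣ s := by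
    intro h
    apply hpr.not_dvd_one
    have := dvd_sub h h1
    simpa using this
  have hk : emultiplicity p (p ^ k) = (k : ℕ∞) :=
    emultiplicity_pow_self_of_prime hp.out.prime k
  rcases hp.out.eq_two_or_odd' with rfl | hodd
  · have := Int.two_pow_sub_pow' (x := s) (y := 1) (2 ^ k) (h2 rfl) hs
    rw [one_pow] at this
    have e : emultiplicity (2 : ℤ) ((2 ^ k : ℕ) : ℤ) = (k : ℕ∞) := by
      rw [← hk]; exact_mod_cast Int.natCast_emultiplicity 2 (2 ^ k)
    push_cast at hc this e ⊢
    rw [this, hc, e]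
  · have := Int.emultiplicity_pow_sub_pow hp.out hodd (x := s) (y := 1) h1 hs (p ^ k)
    rw [one_pow] at this
    rw [this, hc, hk]
    push_cast
    rfl

/-- If the class of the generator `g` contains no `g + t` with `t ≠ 0` of order `p`, then it
contains no `k ≠ g` congruent to `g` modulo `p` (modulo `4` if `p = 2`). Otherwise `k = s • g`, all
`s ^ j • g` lie in the class by Schur's theorem, and for a suitable power `j` of `p` the element
`(s ^ j - 1) • g` has order exactly `p`. -/
lemma eq_of_class_of_congr (h : Matched b b) (hG : Nat.card G = p ^ n) {g k : G} (hg : Gen g)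
    (hn : n ≠ 0) (hK : n = 1 ∨ ∀ t : G, (p : ℤ) • t = 0 → b (g + t) = b g → t = 0)
    (hk : b k = b g) (h1 : k - g ∈ mulSub p 1 G) (h2 : p = 2 → k - g ∈ mulSub p 2 G) : k = g := by
  have hpr : Prime (p : ℤ) := Nat.prime_iff_prime_int.1 hp.out
  rcases hK with rfl | hK
  · rw [mem_mulSub] at h1
    obtain ⟨y, hy⟩ := h1
    rw [pow_smul_eq_zero hG] at hy
    exact sub_eq_zero.1 hy
  by_cases hn1 : n = 1
  · subst hn1
    rw [mem_mulSub] at h1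
    obtain ⟨y, hy⟩ := h1
    rw [pow_smul_eq_zero hG] at hy
    exact sub_eq_zero.1 hy
  obtain ⟨s, rfl⟩ := hg k
  have e : s • g - g = (s - 1) • g := by rw [sub_smul, one_smul]
  rw [e, hg.smul_mem_mulSub hG (by omega), pow_one] at h1
  have h2' : p = 2 → (4 : ℤ) ∣ s - 1 := by
    intro hp2
    have := h2 hp2
    rw [e, hg.smul_mem_mulSub hG (by omega)] at this
    subst hp2
    simpa using this
  by_contra hne
  have hnd : ¬ (p : ℤ) ^ n ∣ s - 1 := by
    rw [← hg.smul_eq_zero_iff hG, ← e, sub_eq_zero]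
    exact hne
  have hfin : FiniteMultiplicity (p : ℤ) (s - 1) := by
    refine ⟨n, fun h => hnd ((pow_dvd_pow _ (Nat.le_succ n)).trans h)⟩
  obtain ⟨c, hc⟩ : ∃ c : ℕ, emultiplicity (p : ℤ) (s - 1) = c :=
    ⟨_, hfin.emultiplicity_eq_multiplicity⟩
  have hcn : c < n := by
    by_contra hcn
    apply hnd
    apply pow_dvd_of_le_emultiplicity
    rw [hc]
    exact_mod_cast not_lt.1 hcn
  have hex := exists_pow_exact hc h1 h2' (n - 1 - c)
  rw [show c + (n - 1 - c) = n - 1 by omega] at hex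
  set J := p ^ (n - 1 - c)
  have hsp : ¬ (p : ℤ) ∣ s := by
    intro h
    apply hpr.not_dvd_one
    have := dvd_sub h h1
    simpa using this
  have hpow : ∀ j : ℕ, b ((s ^ j) • g) = b g := by
    intro j
    induction j with
    | zero => simp
    | succ j ih =>
      rw [pow_succ', mul_smul, h.mult hG hsp ih, hk]
  have ht := hK ((s ^ J - 1) • g) ?_ ?_
  · rw [hg.smul_eq_zero_iff hG] at ht
    have := le_emultiplicity_of_pow_dvd ht
    rw [hex] at this
    have : n ≤ n - 1 := by exact_mod_cast this
    omega
  · rw [smul_smul, hg.smul_eq_zero_iff hG]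
    have : (p : ℤ) ^ (n - 1) ∣ s ^ J - 1 := pow_dvd_of_le_emultiplicity (by rw [hex])
    obtain ⟨d, hd⟩ := this
    refine ⟨d, ?_⟩
    rw [hd, ← mul_assoc, ← pow_succ', Nat.sub_add_cancel (by omega)]
  · rw [sub_smul, one_smul, add_sub_cancel]
    exact hpow J

lemma gen_agree (h : Matched a b) (hG : Nat.card G = p ^ n) {g : G} (hg : Gen g)
    (hab : a g = b g) {x : G} (hx : Gen x) : a x = b x := by
  obtain ⟨m, hm, rfl⟩ := hg.exists_unit hG hx
  exact h.mult hG hm hab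

open scoped Classical in
/-- The set `X^{[p]}` of Schur, for `X` the class of colour `i`: the elements whose coefficient in
the `p`-th power of the sum of `X` does not vanish modulo `p`. -/
noncomputable def frobSet (p : ℕ) (a : G → ι) (i : ι) : Set G :=
  have := Fintype.ofFinite G
  {z | (∑ u with p • u = z, if a u = i then (1 : ZMod p) else 0) ≠ 0}

lemma exists_of_mem_frobSet {i : ι} {z : G} (hz : z ∈ frobSet p a i) :
    ∃ u, a u = i ∧ z = p • u := by
  classical
  have := Fintype.ofFinite G
  by_contra! hcon
  apply hz
  apply Finset.sum_eq_zero
  intro u hu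
  rw [if_neg]
  intro hau
  exact hcon u hau (Finset.mem_filter.1 hu).2.symm

lemma corr_frobSet (h : Matched a b) (i : ι) :
    Matched.Corr a b (· ∈ frobSet p a i) (· ∈ frobSet p b i) := by
  classical
  have := Fintype.ofFinite G
  intro x y hxy
  have := h.corr_frob p (fun u => if a u = i then 1 else 0) (fun u => if b u = i then 1 else 0)
    (fun u v huv => by simp only [huv]) x y hxy
  simp only at this
  simp only [frobSet, Set.mem_ofPred_eq]
  convert congrArg (· ≠ 0) this

lemma mem_frobSet {g : G} (hK : ∀ t : G, (p : ℤ) • t = 0 → a (g + t) = a g → t = 0) :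
    p • g ∈ frobSet p a (a g) := by
  classical
  have := Fintype.ofFinite G
  simp only [frobSet, Set.mem_ofPred_eq]
  rw [Finset.sum_eq_single g]
  · simp
  · intro u hu hne
    rw [if_neg]
    intro hau
    have hu := (Finset.mem_filter.1 hu).2
    apply hne
    rw [← sub_eq_zero]
    apply hK
    · rw [natCast_zsmul, smul_sub, hu, sub_self]
    · rw [add_sub_cancel, hau]
  · simp

/-- `pG` is generated by Schur's set of the class of `g`, hence matched with itself. -/
lemma corr_mulSub_one (h : Matched a b) (hG : Nat.card G = p ^ n) {g : G} (hg : Gen g)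
    (hab : a g = b g)
    (hKa : ∀ t : G, (p : ℤ) • t = 0 → a (g + t) = a g → t = 0)
    (hKb : ∀ t : G, (p : ℤ) • t = 0 → b (g + t) = b g → t = 0) :
    Matched.Corr a b (· ∈ mulSub p 1 G) (· ∈ mulSub p 1 G) := by
  have key : ∀ {a : G → ι}, (∀ t : G, (p : ℤ) • t = 0 → a (g + t) = a g → t = 0) →
      AddSubgroup.closure (frobSet p a (a g)) = mulSub p 1 G := by
    intro a hK
    apply le_antisymm
    · rw [AddSubgroup.closure_le]
      intro z hz
      obtain ⟨u, -, rfl⟩ := exists_of_mem_frobSet hz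
      exact mem_mulSub.2 ⟨u, by rw [pow_one, natCast_zsmul]⟩
    · intro z hz
      obtain ⟨y, rfl⟩ := mem_mulSub.1 hz
      obtain ⟨k, rfl⟩ := hg y
      rw [smul_comm, pow_one, natCast_zsmul]
      exact zsmul_mem (AddSubgroup.subset_closure (mem_frobSet hK)) k
  have := h.closure (fun x y e => h.neg hG e) (corr_frobSet (p := p) h (a g))
  rw [key hKa, hab, key hKb] at this
  exact this

/-- `p²G` is matched with itself: an element of `pG` outside `p²G` is a unit multiple of `p • g`,
which lies in Schur's set of the class of `g`, and a class of this set lying in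
`p²G` would contradict that the class of `g` consists of generators. -/
lemma corr_mulSub_two (h : Matched a b) (hG : Nat.card G = p ^ n) (hn : 2 ≤ n) {g : G} (hg : Gen g)
    (hab : a g = b g)
    (hKa : ∀ t : G, (p : ℤ) • t = 0 → a (g + t) = a g → t = 0)
    (hKb : ∀ t : G, (p : ℤ) • t = 0 → b (g + t) = b g → t = 0) :
    Matched.Corr a b (· ∈ mulSub p 2 G) (· ∈ mulSub p 2 G) := by
  have key : ∀ {a b : G → ι}, Matched a b → a g = b g →
      (∀ t : G, (p : ℤ) • t = 0 → a (g + t) = a g → t = 0) →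
      (∀ t : G, (p : ℤ) • t = 0 → b (g + t) = b g → t = 0) →
      ∀ x y, a x = b y → y ∈ mulSub p 2 G → x ∈ mulSub p 2 G := by
    intro a b h hab hKa hKb x y hxy hy
    have hy1 : y ∈ mulSub p 1 G := by
      obtain ⟨z, rfl⟩ := mem_mulSub.1 hy
      exact mem_mulSub.2 ⟨(p : ℤ) • z, by rw [smul_smul]; ring_nf⟩
    have hx1 : x ∈ mulSub p 1 G :=
      (iff_of_eq (corr_mulSub_one h hG hg hab hKa hKb x y hxy)).2 hy1
    by_contra hx
    obtain ⟨z, rfl⟩ := mem_mulSub.1 hx1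
    obtain ⟨k, rfl⟩ := hg z
    have hk : ¬ (p : ℤ) ∣ k := by
      rintro ⟨l, rfl⟩
      apply hx
      exact mem_mulSub.2 ⟨l • g, by rw [smul_smul, smul_smul]; ring_nf⟩
    obtain ⟨k', hk', h1, h2⟩ := exists_inv (G := G) hG hk
    have e := h.mult hG hk' hxy
    rw [smul_comm ((p : ℤ) ^ 1) k g, h1, pow_one, natCast_zsmul] at e
    have hm := (iff_of_eq (corr_frobSet (p := p) h (a g) _ _ e)).1 (mem_frobSet hKa)
    obtain ⟨u, hu, hpu⟩ := exists_of_mem_frobSet hm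
    have hgu : Gen u := by
      rw [gen_iff hG (by omega)]
      rw [hab] at hu
      intro hu1
      have := (iff_of_eq (corr_mulSub_one h.symm.self hG hg rfl hKb hKb u g hu)).1 hu1
      exact (gen_iff hG (by omega)).1 hg this
    have : k' • y ∈ mulSub p 2 G := zsmul_mem hy k'
    rw [hpu, ← natCast_zsmul, hgu.smul_mem_mulSub hG hn] at this
    have h1 : (p : ℤ) ^ 2 ∣ p ^ 1 := by simpa using this
    have := (pow_dvd_pow_iff (by exact_mod_cast hp.out.ne_zero)
      (Nat.prime_iff_prime_int.1 hp.out).not_isUnit).1 h1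
    omega
  intro x y hxy
  exact propext ⟨key h.symm hab.symm hKb hKa y x hxy.symm, key h hab hKa hKb x y hxy⟩

/-- The case where the class of `g` contains no `g + t` with `t ≠ 0` of order `p`, or `G` has order
`p`. For a non-generator `y`, the factorization `y + g` of the generator `g + y` is matched with
some `σ y + k`, where `k` has the colour of `g` and is congruent to `g`; so `k = g` and `σ y = y`. -/
lemma eq_of_case1 (h : Matched a b) (hG : Nat.card G = p ^ n) (hn : n ≠ 0) {g : G} (hg : Gen g)
    (hab : a g = b g)
    (hK : n = 1 ∨ ∀ t : G, (p : ℤ) • t = 0 → a (g + t) = a g → t = 0) : a = b := by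
  have hKb : n = 1 ∨ ∀ t : G, (p : ℤ) • t = 0 → b (g + t) = b g → t = 0 := by
    by_cases hn1 : n = 1
    · exact Or.inl hn1
    have hK := hK.resolve_left hn1
    refine Or.inr fun t ht hb => hK t ht ?_
    have := hg.add hG hn (not_gen_of_smul_eq_zero hG (by omega) ht)
    rw [gen_agree h hG hg hab this, hb, hab]
  have c1 : Matched.Corr a b (· ∈ mulSub p 1 G) (· ∈ mulSub p 1 G) := by
    by_cases hn1 : n = 1
    · subst hn1
      have : ∀ x : G, x ∈ mulSub p 1 G ↔ x = 0 := by
        intro x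
        rw [mem_mulSub]
        simp only [pow_smul_eq_zero hG]
        simp
      intro x y hxy
      simp only [this, h.zero_iff hxy]
    · exact corr_mulSub_one h hG hg hab (hK.resolve_left hn1) (hKb.resolve_left hn1)
  have c2 : Matched.Corr a b (· ∈ mulSub p 2 G) (· ∈ mulSub p 2 G) := by
    by_cases hn1 : n = 1
    · subst hn1
      have : ∀ x : G, x ∈ mulSub p 2 G ↔ x = 0 := by
        intro x
        have e := fun y : G => pow_smul_eq_zero hG ((p : ℤ) • y)
        simp only [smul_smul, ← pow_succ] at e
        norm_num at e
        simp [mem_mulSub, e]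
      intro x y hxy
      simp only [this, h.zero_iff hxy]
    · exact corr_mulSub_two h hG (by omega) hg hab (hK.resolve_left hn1) (hKb.resolve_left hn1)
  funext y
  by_cases hy : Gen y
  · exact gen_agree h hG hg hab hy
  have hgy : a (g + y) = b (g + y) := gen_agree h hG hg hab (hg.add hG hn hy)
  obtain ⟨σ, hσ⟩ := h.conv _ _ hgy
  obtain ⟨e1, e2⟩ := hσ y
  rw [add_sub_cancel_right, hab] at e2
  rw [gen_iff hG hn, not_not] at hy
  have hy2 : σ y ∈ mulSub p 1 G := (iff_of_eq (c1 _ _ e1)).1 hy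
  have key : g + y - σ y = g := by
    refine eq_of_class_of_congr h.symm.self hG hg hn hKb e2.symm ?_ ?_
    · rw [add_sub_assoc, add_sub_cancel_left]
      exact sub_mem hy hy2
    · rintro rfl
      rw [add_sub_assoc, add_sub_cancel_left]
      by_cases hy4 : y ∈ mulSub 2 2 G
      · exact sub_mem hy4 ((iff_of_eq (c2 _ _ e1)).1 hy4)
      · have hy4' : σ y ∉ mulSub 2 2 G := fun hh => hy4 ((iff_of_eq (c2 _ _ e1)).2 hh)
        -- two odd multiples of `2 • g` differ by a multiple of `4`
        obtain ⟨u, hu⟩ := mem_mulSub.1 hy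
        obtain ⟨v, hv⟩ := mem_mulSub.1 hy2
        obtain ⟨k, rfl⟩ := hg u
        obtain ⟨l, rfl⟩ := hg v
        rw [hu, mem_mulSub] at hy4
        rw [hv, mem_mulSub] at hy4'
        rw [hv, hu, mem_mulSub]
        rcases Int.even_or_odd' k with ⟨k, rfl | rfl⟩
        · exact absurd ⟨k • g, by rw [smul_smul, smul_smul]; congr 1; push_cast; ring⟩ hy4
        rcases Int.even_or_odd' l with ⟨l, rfl | rfl⟩
        · exact absurd ⟨l • g, by rw [smul_smul, smul_smul]; congr 1; push_cast; ring⟩ hy4'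
        refine ⟨(k - l) • g, ?_⟩
        rw [smul_smul, smul_smul, smul_smul, ← sub_smul]
        congr 1; push_cast; ring
  rw [e1]
  congr 1
  rw [add_sub_assoc, add_eq_left, sub_eq_zero] at key
  exact key.symm

end Case1

/-! ### Trivial radical, second case: counting -/

section Case2
variable {G ι : Type*} [AddCommGroup G] [Finite G] {p n : ℕ} [hp : Fact p.Prime]
  {a b : G → ι}

/-- The field `conv` for differences instead of sums, which is obtained by negation. -/
lemma Matched.conv_add (h : Matched a b) (hG : Nat.card G = p ^ n) {x y : G} (hxy : a x = b y) :
    ∃ σ : Equiv.Perm G, ∀ u, a u = b (σ u) ∧ a (u + x) = b (σ u + y) := by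
  obtain ⟨σ, hσ⟩ := h.conv x y hxy
  refine ⟨(Equiv.neg G).trans (σ.trans (Equiv.neg G)), fun u => ?_⟩
  obtain ⟨h1, h2⟩ := hσ (-u)
  have e : ((Equiv.neg G).trans (σ.trans (Equiv.neg G))) u = -σ (-u) := rfl
  rw [e]
  refine ⟨?_, ?_⟩
  · have := h.neg hG h1
    rwa [neg_neg] at this
  · rwa [sub_neg_eq_add, add_comm, sub_eq_neg_add] at h2

lemma exists_multEquiv (hG : Nat.card G = p ^ n) {m : ℤ} (hm : ¬ (p : ℤ) ∣ m) :
    ∃ τ : G ≃ G, ∀ x, τ x = m • x := by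
  obtain ⟨m', -, h1, h2⟩ := exists_inv (G := G) hG hm
  exact ⟨⟨fun x => m • x, fun x => m' • x, h1, h2⟩, fun x => rfl⟩

lemma smul_mem_iff (hG : Nat.card G = p ^ n) {m : ℤ} (hm : ¬ (p : ℤ) ∣ m) (U : AddSubgroup G)
    (x : G) : m • x ∈ U ↔ x ∈ U := by
  obtain ⟨m', -, h1, h2⟩ := exists_inv (G := G) hG hm
  refine ⟨fun hx => ?_, fun hx => zsmul_mem hx m⟩
  rw [← h1 x]
  exact zsmul_mem hx m'

lemma gen_smul_iff (hG : Nat.card G = p ^ n) {m : ℤ} (hm : ¬ (p : ℤ) ∣ m) 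
    (x : G) : Gen (m • x) ↔ Gen x := by
  obtain ⟨m', hm', h1, h2⟩ := exists_inv (G := G) hG hm
  refine ⟨fun hx => ?_, fun hx => hx.smul hG hm⟩
  rw [← h1 x]
  exact hx.smul hG hm'

lemma exists_unit_of_mem (hG : Nat.card G = p ^ n) {x y : G} (hx : x ∈ AddSubgroup.zmultiples y)
    (hy : y ∈ AddSubgroup.zmultiples x) : ∃ m : ℤ, ¬ (p : ℤ) ∣ m ∧ x = m • y := by
  have hpr : Prime (p : ℤ) := Nat.prime_iff_prime_int.1 hp.out
  obtain ⟨k, rfl⟩ := AddSubgroup.mem_zmultiples_iff.1 hx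
  obtain ⟨l, hl⟩ := AddSubgroup.mem_zmultiples_iff.1 hy
  by_cases hk : (p : ℤ) ∣ k
  · have hu : ¬ (p : ℤ) ∣ 1 - l * k := by
      intro hd
      apply hpr.not_dvd_one
      have := dvd_add hd (hk.mul_left l)
      simpa using this
    obtain ⟨m', -, h1, -⟩ := exists_inv (G := G) hG hu
    have : y = 0 := by
      rw [← h1 y, sub_smul, one_smul, mul_smul, hl, sub_self, smul_zero]
    exact ⟨1, hpr.not_dvd_one, by simp [this]⟩
  · exact ⟨k, hk, rfl⟩

/-- Subgroups of a cyclic `p`-group form a chain, so a set generates the same subgroup as one of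
its elements. -/
lemma exists_closure_eq [IsAddCyclic G] (hG : Nat.card G = p ^ n) {S : Set G} (hS : S.Nonempty) :
    ∃ x ∈ S, AddSubgroup.closure S = AddSubgroup.zmultiples x := by
  obtain ⟨x, hx, hmax⟩ := Set.exists_max_image S (fun x => Nat.card (AddSubgroup.zmultiples x))
    (Set.toFinite S) hS
  refine ⟨x, hx, le_antisymm ?_ ?_⟩
  · rw [AddSubgroup.closure_le]
    intro y hy
    rcases le_total_sub hG (AddSubgroup.zmultiples y) (AddSubgroup.zmultiples x) with h | h
    · exact h (AddSubgroup.mem_zmultiples y)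
    · have := AddSubgroup.eq_of_le_of_card_ge h (hmax y hy)
      rw [this]
      exact AddSubgroup.mem_zmultiples y
  · rw [AddSubgroup.zmultiples_le]
    exact AddSubgroup.subset_closure hx

variable [IsAddCyclic G]

lemma mem_zmultiples_of_smul_eq_zero {t₀ t : G} (h0 : t₀ ≠ 0)
    (hp0 : (p : ℤ) • t₀ = 0) (ht : (p : ℤ) • t = 0) : t ∈ AddSubgroup.zmultiples t₀ := by
  have : Nat.card (AddSubgroup.zmultiples t₀) = p := by
    rw [Nat.card_zmultiples]
    exact addOrderOf_eq_prime (by rw [← natCast_zsmul]; exact hp0) h0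
  rw [mem_iff_card_smul, this, ← natCast_zsmul]
  exact ht

/-- If the class of one generator meets a coset of the subgroup of order `p` twice, all generators
keep their colour under translation by that subgroup. -/
lemma class_add_eq (h : Matched a a) (hG : Nat.card G = p ^ n) (hn : 2 ≤ n) {g : G} (hg : Gen g)
    {t₀ : G} (h0 : t₀ ≠ 0) (hp0 : (p : ℤ) • t₀ = 0) (hgt : a (g + t₀) = a g)
    {x t : G} (hx : Gen x) (ht : (p : ℤ) • t = 0) : a (x + t) = a x := by
  have hpr : Prime (p : ℤ) := Nat.prime_iff_prime_int.1 hp.out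
  have key : ∀ t : G, (p : ℤ) • t = 0 → a (g + t) = a g := by
    intro t ht
    have hmem := mem_zmultiples_of_smul_eq_zero h0 hp0 ht
    rw [← mem_multiples_iff_mem_zmultiples] at hmem
    obtain ⟨k, rfl⟩ := (AddSubmonoid.mem_multiples_iff _ _).1 hmem
    clear ht hmem
    obtain ⟨c, hc⟩ := hg t₀
    have hpc : (p : ℤ) ∣ c := by
      by_contra hcon
      have := hg.smul hG hcon
      rw [← hc] at this
      exact not_gen_of_smul_eq_zero hG hn hp0 this
    have hs : ¬ (p : ℤ) ∣ 1 + c := by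
      intro hd
      apply hpr.not_dvd_one
      have := dvd_sub hd hpc
      simpa using this
    have hst : (1 + c) • t₀ = t₀ := by
      obtain ⟨d, rfl⟩ := hpc
      rw [add_smul, one_smul, mul_comm, mul_smul, hp0, smul_zero, add_zero]
    have hsg : (1 + c) • g = g + t₀ := by rw [add_smul, one_smul, ← hc]
    induction k with
    | zero => simp
    | succ k ih =>
      have := h.mult hG hs ih
      rw [smul_add, smul_comm (1 + c) k t₀, hst, hsg, hgt] at this
      rw [succ_nsmul, add_comm (k • t₀), ← add_assoc]
      exact this
  obtain ⟨m, hm, rfl⟩ := hg.exists_unit hG hx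
  obtain ⟨m', hm', h1, h2⟩ := exists_inv (G := G) hG hm
  have := h.mult hG hm (key (m' • t) (by rw [smul_comm, ht, smul_zero]))
  rwa [smul_add, h2] at this

/-- The class of `t₀`, of order `p`, generates the smallest nontrivial subgroup that is a union of
classes, so every nonzero element of this subgroup has a class generating it too, and the two
classes are conjugate under a multiplier. -/
lemma exists_unit_class (h : Matched a a) (hG : Nat.card G = p ^ n) {t₀ : G}
    (hp0 : (p : ℤ) • t₀ = 0) {t : G} (ht : t ∈ AddSubgroup.closure {x | a x = a t₀})
    (ht0 : t ≠ 0) : ∃ m : ℤ, ¬ (p : ℤ) ∣ m ∧ a t = a (m • t₀) := by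
  obtain ⟨x, hx, ex⟩ := exists_closure_eq hG (S := {x | a x = a t}) ⟨t, rfl⟩
  obtain ⟨y, hy, ey⟩ := exists_closure_eq hG (S := {x | a x = a t₀}) ⟨t₀, rfl⟩
  have hle : AddSubgroup.closure {x | a x = a t} ≤ AddSubgroup.closure {x | a x = a t₀} := by
    rw [AddSubgroup.closure_le]
    intro u hu
    exact (iff_of_eq (h.closure_class hG (a t₀) t u (Eq.symm hu))).1 ht
  have htt : t ∈ AddSubgroup.closure {x | a x = a t} := AddSubgroup.subset_closure rfl
  have ht₀ : t₀ ∈ AddSubgroup.closure {x | a x = a t} := by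
    rcases le_total_sub hG (AddSubgroup.zmultiples t₀) (AddSubgroup.closure {x | a x = a t})
      with hh | hh
    · exact hh (AddSubgroup.mem_zmultiples t₀)
    · obtain ⟨k, hk⟩ := AddSubgroup.mem_zmultiples_iff.1 (hh htt)
      have : (p : ℤ) • t = 0 := by rw [← hk, smul_comm, hp0, smul_zero]
      have := mem_zmultiples_of_smul_eq_zero ht0 this hp0
      exact (AddSubgroup.zmultiples_le.2 htt) this
  have hge : AddSubgroup.closure {x | a x = a t₀} ≤ AddSubgroup.closure {x | a x = a t} := by
    rw [AddSubgroup.closure_le]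
    intro u hu
    exact (iff_of_eq (h.closure_class hG (a t) t₀ u (Eq.symm hu))).1 ht₀
  have e := le_antisymm hle hge
  rw [ex, ey] at e
  obtain ⟨m, hm, rfl⟩ := exists_unit_of_mem hG (x := x) (y := y)
    (e ▸ AddSubgroup.mem_zmultiples x) (e ▸ AddSubgroup.mem_zmultiples y)
  exact ⟨m, hm, (Eq.symm hx).trans (h.mult hG hm hy)⟩

open scoped Classical in
/-- At least half of the elements of a nontrivial cyclic `p`-group are generators. -/
lemma card_le_two_mul_gen [Fintype G] (hG : Nat.card G = p ^ n) (hn : n ≠ 0) :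
    Fintype.card G ≤ 2 * (Finset.univ.filter fun x : G => Gen x).card := by
  obtain ⟨g, hg⟩ := exists_gen (G := G)
  have hne : mulSub p 1 G ≠ ⊤ := by
    intro h
    have := (gen_iff hG hn).1 hg
    rw [h] at this
    exact this trivial
  have h1 := AddSubgroup.card_mul_index (mulSub p 1 G)
  have h2 : (mulSub p 1 G).index ≠ 1 := fun h => hne (AddSubgroup.index_eq_one.1 h)
  have h3 : (mulSub p 1 G).index ≠ 0 := AddSubgroup.index_ne_zero_of_finite
  have h4 : Nat.card (mulSub p 1 G) = (Finset.univ.filter fun x : G => ¬ Gen x).card := by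
    rw [Nat.card_eq_fintype_card, Fintype.card_subtype]
    congr 1
    ext x
    simp [gen_iff hG hn]
  have h5 := Finset.card_filter_add_card_filter_not (s := Finset.univ) (fun x : G => Gen x)
  rw [Finset.card_univ] at h5
  rw [Nat.card_eq_fintype_card (α := G)] at h1
  have : 2 ≤ (mulSub p 1 G).index := by omega
  nlinarith

open scoped Classical in
/-- The class `X` of `g` contains more than half of the coset `g + E₀`, where `E₀` is the subgroup
generated by the class of `t₀`. Let `l = |X ∩ (g + E₀)|`, and let `γ` be the number of generators in
`X`. For nonzero `t ∈ E₀` the set `X ∩ (X - t)` has at least `γ` elements; summing over `t` gives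
`(|E₀| - 1) * γ ≤ |X| * (l - 1)`. Counting pairs of a generator and a nonzero element of the same
colour gives `|W| * |X| ≤ (|G| - 1) * γ`, where the set `W` of generators makes up at least half
of `G`. -/
lemma card_lt_two_mul [Fintype G] (h : Matched a a) (hG : Nat.card G = p ^ n) (hn : 2 ≤ n) {g : G}
    (hg : Gen g) {t₀ : G} (h0 : t₀ ≠ 0) (hp0 : (p : ℤ) • t₀ = 0) (hgt : a (g + t₀) = a g) :
    (Finset.univ.filter fun t : G => t ∈ AddSubgroup.closure {x | a x = a t₀}).card <
      2 * (Finset.univ.filter fun t : G => t ∈ AddSubgroup.closure {x | a x = a t₀} ∧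
        a (t + g) = a g).card := by
  set T := Finset.univ.filter fun t : G => t ∈ AddSubgroup.closure {x | a x = a t₀} with hT
  set l := (Finset.univ.filter fun t : G => t ∈ AddSubgroup.closure {x | a x = a t₀} ∧
        a (t + g) = a g).card with hl
  set X := Finset.univ.filter fun y : G => a y = a g with hX
  set W := Finset.univ.filter fun y : G => Gen y with hW
  set γ := (Finset.univ.filter fun y : G => Gen y ∧ a y = a g).card with hγ
  have hg0 : g ≠ 0 := by
    rintro rfl
    exact not_gen_of_smul_eq_zero hG hn (smul_zero _) hg
  let r : G → ℕ := fun t => (X.filter fun y => a (t + y) = a g).card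
  have hr : ∀ t ∈ T, t ≠ 0 → γ ≤ r t := by
    intro t ht ht0
    obtain ⟨m, hm, e⟩ := exists_unit_class h hG hp0 (by simpa [hT] using ht) ht0
    have e1 : r t = r (m • t₀) := by
      obtain ⟨σ, hσ⟩ := h.conv_add hG e
      refine Finset.card_equiv σ fun y => ?_
      simp only [hX, Finset.mem_filter, Finset.mem_univ, true_and]
      rw [(hσ y).1, add_comm t, (hσ y).2, add_comm (σ y)]
    rw [e1]
    refine Finset.card_le_card fun y hy => ?_
    simp only [hX, Finset.mem_filter, Finset.mem_univ, true_and] at hy ⊢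
    refine ⟨hy.2, ?_⟩
    rw [add_comm, class_add_eq h hG hn hg h0 hp0 hgt hy.1 (by rw [smul_comm, hp0, smul_zero]), hy.2]
  have hr0 : r 0 = X.card := by
    change (X.filter fun y => a (0 + y) = a g).card = X.card
    rw [Finset.filter_true_of_mem]
    intro y hy
    simpa [hX] using hy
  have hsum : ∑ t ∈ T, r t = X.card * l := by
    have := Finset.sum_card_bipartiteAbove_eq_sum_card_bipartiteBelow
      (s := T) (t := X) (fun t y => a (t + y) = a g)
    refine this.trans (Finset.sum_const_nat ?_)
    · intro y hy
      simp only [hX, Finset.mem_filter, Finset.mem_univ, true_and] at hy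
      obtain ⟨σ, hσ⟩ := h.conv_add hG hy
      refine Finset.card_equiv σ fun t => ?_
      simp only [hT, Finset.mem_bipartiteBelow, Finset.mem_filter, Finset.mem_univ, true_and]
      rw [(hσ t).2]
      exact and_congr_left' (iff_of_eq (h.closure_class hG (a t₀) t (σ t) (hσ t).1))
  have h0T : 0 ∈ T := by simp [hT, zero_mem]
  have hineq1 : (T.card - 1) * γ + X.card ≤ X.card * l := by
    rw [← hsum, ← Finset.sum_erase_add _ _ h0T, hr0, ← Finset.card_erase_of_mem h0T]
    gcongr
    rw [← smul_eq_mul]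
    exact Finset.card_nsmul_le_sum _ _ _ fun t ht =>
      hr t (Finset.mem_of_mem_erase ht) (Finset.ne_of_mem_erase ht)
  have hineq2 : W.card * X.card ≤ (Fintype.card G - 1) * γ := by
    have := Finset.sum_card_bipartiteAbove_eq_sum_card_bipartiteBelow
      (s := W) (t := Finset.univ.erase 0) (fun u y => a u = a y)
    rw [Finset.sum_const_nat (m := X.card)] at this
    · rw [this, ← Finset.card_univ, ← Finset.card_erase_of_mem (Finset.mem_univ (0 : G)),
        ← smul_eq_mul]
      refine Finset.sum_le_card_nsmul _ _ _ fun y hy => ?_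
      rcases (Finset.bipartiteBelow (fun u y => a u = a y) W y).eq_empty_or_nonempty with he | ⟨u, hu⟩
      · rw [he]; simp
      · simp only [hW, Finset.mem_bipartiteBelow, Finset.mem_filter, Finset.mem_univ,
          true_and] at hu
        obtain ⟨m, hm, rfl⟩ := hg.exists_unit hG hu.1
        obtain ⟨τ, hτ⟩ := exists_multEquiv (G := G) hG hm
        refine le_of_eq (Finset.card_equiv τ fun u => ?_).symm
        simp only [hW, Finset.mem_bipartiteBelow, Finset.mem_filter, Finset.mem_univ,
          true_and, hτ]
        rw [← hu.2, gen_smul_iff hG hm, h.mult_iff hG hm]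
    · intro u hu
      simp only [hW, Finset.mem_filter, Finset.mem_univ, true_and] at hu
      obtain ⟨m, hm, rfl⟩ := hg.exists_unit hG hu
      obtain ⟨τ, hτ⟩ := exists_multEquiv (G := G) hG hm
      refine (Finset.card_equiv τ fun y => ?_).symm
      simp only [hX, Finset.mem_bipartiteAbove, Finset.mem_filter, Finset.mem_univ, true_and,
        Finset.mem_erase, and_true, hτ]
      rw [h.mult_iff hG hm, eq_comm, iff_and_self]
      intro e hy
      have : y = 0 := by
        obtain ⟨m', -, h1, -⟩ := exists_inv (G := G) hG hm
        rw [← h1 y, hy, smul_zero]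
      rw [this] at e
      exact hg0 (h.left g e)
  have hineq3 := card_le_two_mul_gen (G := G) hG (by omega)
  have hXpos : 0 < X.card := Finset.card_pos.2 ⟨g, by simp [hX]⟩
  have hTpos : 2 ≤ T.card := by
    have : ({0, t₀} : Finset G) ⊆ T := by
      intro x hx
      simp only [Finset.mem_insert, Finset.mem_singleton] at hx
      rcases hx with rfl | rfl
      · exact h0T
      · simp only [hT, Finset.mem_filter, Finset.mem_univ, true_and]
        exact AddSubgroup.subset_closure rfl
    have := Finset.card_le_card this
    rwa [Finset.card_pair (Ne.symm h0)] at this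
  have hN : 0 < Fintype.card G := Fintype.card_pos
  obtain ⟨T', hT'⟩ := Nat.exists_eq_add_of_le' (show 1 ≤ T.card by omega)
  obtain ⟨N, hN'⟩ := Nat.exists_eq_add_of_le' hN
  rw [hT'] at hineq1 ⊢
  rw [hN'] at hineq2
  change Fintype.card G ≤ 2 * W.card at hineq3
  rw [hN'] at hineq3
  simp only [Nat.add_sub_cancel] at hineq1 hineq2
  -- multiply the first inequality by `N` and the second by `T'` and eliminate `γ`
  have h1 : X.card * (W.card * T' + N) ≤ X.card * (N * l) := by nlinarith
  have h2 := Nat.le_of_mul_le_mul_left h1 hXpos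
  by_contra hcon
  push Not at hcon
  nlinarith

/-- The case where the class of `g` contains some `g + t₀` with `t₀` of order `p`. Either the class
of `t₀` generates a proper subgroup, which then lies in the radical of the class of `g`, or all
nonzero elements have the same colour. -/
lemma eq_of_case2 (h : Matched a b) (hG : Nat.card G = p ^ n) (hn : 2 ≤ n) {g : G}
    (hg : Gen g) (hab : a g = b g) (hrad : ∀ t, (∀ x, a x = a g ↔ a (x + t) = a g) → t = 0)
    {t₀ : G} (h0 : t₀ ≠ 0) (hp0 : (p : ℤ) • t₀ = 0) (hgt : a (g + t₀) = a g) : a = b := by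
  classical
  have := Fintype.ofFinite G
  have ha := h.self
  have hcount := card_lt_two_mul ha hG hn hg h0 hp0 hgt
  have hcor := ha.closure_class hG (a t₀)
  have ht₀ : t₀ ∈ AddSubgroup.closure {x | a x = a t₀} := AddSubgroup.subset_closure rfl
  by_cases htop : AddSubgroup.closure {x | a x = a t₀} = ⊤
  · have hall : ∀ t : G, t ∈ AddSubgroup.closure {x | a x = a t₀} := fun t => htop ▸ trivial
    have hg0 : g ≠ 0 := by
      rintro rfl
      exact not_gen_of_smul_eq_zero hG hn (smul_zero _) hg
    have hcls : ∀ y, y ≠ 0 → (Finset.univ.filter fun x => a x = a y).card =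
        (Finset.univ.filter fun x => a x = a t₀).card := by
      intro y hy
      obtain ⟨m, hm, e⟩ := exists_unit_class ha hG hp0 (hall y) hy
      obtain ⟨τ, hτ⟩ := exists_multEquiv (G := G) hG hm
      refine (Finset.card_equiv τ fun u => ?_).symm
      simp only [Finset.mem_filter, Finset.mem_univ, true_and, hτ]
      rw [e, ha.mult_iff hG hm]
    simp only [hall, true_and, Finset.filter_true, Finset.card_univ] at hcount
    have hlam : (Finset.univ.filter fun t => a (t + g) = a g).card =
        (Finset.univ.filter fun x => a x = a g).card := by
      refine Finset.card_equiv (Equiv.addRight g) fun t => ?_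
      simp
    rw [hlam] at hcount
    have hconst : ∀ y, y ≠ 0 → a y = a g := by
      intro y hy
      by_contra hne
      have hdisj : Disjoint (Finset.univ.filter fun x => a x = a g)
          (Finset.univ.filter fun x => a x = a y) := by
        rw [Finset.disjoint_filter]
        intro x _ h1 h2
        exact hne (h2.symm.trans h1)
      have := Finset.card_le_univ ((Finset.univ.filter fun x => a x = a g) ∪
          (Finset.univ.filter fun x => a x = a y))
      rw [Finset.card_union_of_disjoint hdisj, hcls y hy, ← hcls g hg0] at this
      omega
    funext y
    by_cases hy : y = 0
    · rw [hy, h.zero]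
    · obtain ⟨x, hx⟩ := h.exists_left y
      have : x ≠ 0 := fun hx0 => hy ((h.zero_iff hx).1 hx0)
      rw [hconst y hy, ← hx, hconst x this]
  · exfalso
    have hin : ∀ t ∈ AddSubgroup.closure {x | a x = a t₀}, a (t + g) = a g := by
      intro t ht
      by_contra hne
      have hgen : Gen (g + t) := hg.add hG (by omega) fun hh => hh.not_mem htop ht
      obtain ⟨m, hm, e⟩ := hg.exists_unit hG hgen
      obtain ⟨τ, hτ⟩ := exists_multEquiv (G := G) hG hm
      have hc : (Finset.univ.filter fun u : G => u ∈ AddSubgroup.closure {x | a x = a t₀} ∧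
          a (u + g) = a g).card = (Finset.univ.filter fun u : G =>
            u ∈ AddSubgroup.closure {x | a x = a t₀} ∧ a (u + g) = a (g + t)).card := by
        refine Finset.card_equiv (τ.trans (Equiv.addRight t)) fun u => ?_
        simp only [Finset.mem_filter, Finset.mem_univ, true_and, Equiv.trans_apply,
          Equiv.coe_addRight, hτ]
        rw [AddSubgroup.add_mem_cancel_right _ ht, smul_mem_iff hG hm, add_assoc, add_comm t g, e,
          ← smul_add, ha.mult_iff hG hm]
      have hdisj : Disjoint (Finset.univ.filter fun u : G =>
            u ∈ AddSubgroup.closure {x | a x = a t₀} ∧ a (u + g) = a g)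
          (Finset.univ.filter fun u : G =>
            u ∈ AddSubgroup.closure {x | a x = a t₀} ∧ a (u + g) = a (g + t)) := by
        rw [Finset.disjoint_filter]
        rintro u _ ⟨-, h1⟩ ⟨-, h2⟩
        exact hne (by rw [add_comm, ← h2, h1])
      have hsub : (Finset.univ.filter fun u : G =>
            u ∈ AddSubgroup.closure {x | a x = a t₀} ∧ a (u + g) = a g) ∪
          (Finset.univ.filter fun u : G =>
            u ∈ AddSubgroup.closure {x | a x = a t₀} ∧ a (u + g) = a (g + t)) ⊆
          Finset.univ.filter fun u : G => u ∈ AddSubgroup.closure {x | a x = a t₀} := by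
        intro u
        simp only [Finset.mem_union, Finset.mem_filter, Finset.mem_univ, true_and]
        rintro (hu | hu) <;> exact hu.1
      have := Finset.card_le_card hsub
      rw [Finset.card_union_of_disjoint hdisj, ← hc] at this
      omega
    have hin' : ∀ t ∈ AddSubgroup.closure {x | a x = a t₀}, ∀ x, a x = a g → a (x + t) = a g := by
      intro t ht x hx
      obtain ⟨σ, hσ⟩ := ha.conv_add hG hx
      rw [add_comm, (hσ t).2]
      exact hin _ ((iff_of_eq (hcor _ _ (hσ t).1)).1 ht)
    refine h0 (hrad t₀ fun x => ⟨hin' t₀ ht₀ x, fun hx => ?_⟩)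
    have := hin' _ (neg_mem ht₀) _ hx
    rwa [add_neg_cancel_right] at this

/-- Colourings with trivial radical that agree at a generator are equal. -/
theorem eq_of_trivial_rad (h : Matched a b) (hG : Nat.card G = p ^ n) {g : G}
    (hg : Gen g) (hab : a g = b g) (hrad : ∀ t, (∀ x, a x = a g ↔ a (x + t) = a g) → t = 0) :
    a = b := by
  by_cases hn0 : n = 0
  · subst hn0
    have : Subsingleton G := (Nat.card_eq_one_iff_unique.1 (by simpa using hG)).1
    funext x
    rw [Subsingleton.elim x g, hab]
  by_cases hK : n = 1 ∨ ∀ t : G, (p : ℤ) • t = 0 → a (g + t) = a g → t = 0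
  · exact eq_of_case1 h hG hn0 hg hab hK
  · push Not at hK
    obtain ⟨hn1, t, h1, h2, h3⟩ := hK
    exact eq_of_case2 h hG (by omega) hg hab hrad h3 h1 h2

end Case2

/-! ### Restrictions, quotients and radicals -/

section Quot
variable {G ι : Type*} [AddCommGroup G]
  {a b : G → ι}

namespace Matched

lemma restrict (h : Matched a b) {U : AddSubgroup G} (hU : Corr a b (· ∈ U) (· ∈ U)) :
    Matched (fun x : U => a x) (fun x : U => b x) where
  zero := h.zero
  left x hx := Subtype.ext (h.left x hx)
  right x hx := Subtype.ext (h.right x hx)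
  conv x y hxy := by
    obtain ⟨σ, hσ⟩ := h.conv x y hxy
    exact ⟨σ.subtypePerm fun u => (iff_of_eq (hU _ _ (hσ u).1)).symm, fun u => hσ u⟩

variable [Finite G]

/-- A permutation of `G` matching the pullbacks of two colourings of a quotient can be replaced by
a permutation of the quotient, as all cosets have the same size. -/
lemma exists_perm_quot {κ : Type*} {L : AddSubgroup G} (F F' : G ⧸ L → κ) (σ : Equiv.Perm G)
    (hσ : ∀ u : G, F u = F' (σ u : G)) : ∃ τ : Equiv.Perm (G ⧸ L), ∀ v, F v = F' (τ v) := by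
  have key : ∀ c, Nonempty ({v // F v = c} ≃ {v // F' v = c}) := by
    intro c
    have hpre : ∀ S : Set (G ⧸ L),
        Nat.card (((↑) : G → G ⧸ L) ⁻¹' S) = Nat.card L * Nat.card S := fun S => by
      rw [← Nat.card_prod,
        Nat.card_congr (QuotientAddGroup.preimageMkEquivAddSubgroupProdSet L S)]
    have h3 : Nat.card (((↑) : G → G ⧸ L) ⁻¹' {v | F v = c}) =
        Nat.card (((↑) : G → G ⧸ L) ⁻¹' {v | F' v = c}) :=
      Nat.card_congr (σ.subtypeEquiv fun u => by
        change F u = c ↔ F' (σ u : G) = c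
        rw [hσ])
    rw [hpre, hpre] at h3
    exact Finite.card_eq.1 (Nat.eq_of_mul_eq_mul_left Nat.card_pos h3)
  have e := fun c => (key c).some
  exact ⟨Equiv.ofFiberEquiv e, fun v => (Equiv.ofFiberEquiv_map e v).symm⟩

end Matched

/-- The colouring of `G ⧸ L` whose classes are the images of the classes of `a`: a coset is
coloured by the set of colours occurring in it. -/
def quotCol (a : G → ι) (L : AddSubgroup G) (q : G ⧸ L) : Set ι :=
  a '' {x | (x : G ⧸ L) = q}

/-- The radical of the class of colour `i`: the translations preserving it. -/
def rad (a : G → ι) (i : ι) : AddSubgroup G where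
  carrier := {t | ∀ x, a x = i ↔ a (x + t) = i}
  zero_mem' := by intro x; rw [add_zero]
  add_mem' := by
    intro s t hs ht x
    rw [← add_assoc, ← ht, ← hs]
  neg_mem' := by
    intro t ht x
    rw [ht (x + -t), neg_add_cancel_right]

lemma mem_rad {i : ι} {t : G} : t ∈ rad a i ↔ ∀ x, a x = i ↔ a (x + t) = i := Iff.rfl

variable [Finite G] {p n : ℕ} [hp : Fact p.Prime]

namespace Matched

/-- Elements of the same colour lie in cosets of the same colour. -/
lemma quotCol_eq (h : Matched a b) (hG : Nat.card G = p ^ n) {L : AddSubgroup G}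
    (hL : Corr a b (· ∈ L) (· ∈ L)) {x y : G} (hxy : a x = b y) :
    quotCol a L x = quotCol b L y := by
  have key : ∀ {a b : G → ι}, Matched a b → Corr a b (· ∈ L) (· ∈ L) → ∀ {x y : G}, a x = b y →
      quotCol a L x ⊆ quotCol b L y := by
    rintro a b h hL x y hxy _ ⟨z, hz, rfl⟩
    obtain ⟨σ, hσ⟩ := h.conv_add hG hxy
    obtain ⟨h1, h2⟩ := hσ (z - x)
    rw [sub_add_cancel] at h2
    have hz' : z - x ∈ L := by
      have := QuotientAddGroup.eq.1 (Eq.symm hz)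
      rwa [neg_add_eq_sub] at this
    refine ⟨_, ?_, h2.symm⟩
    refine QuotientAddGroup.eq.2 ?_
    rw [neg_add, neg_add_cancel_right]
    exact neg_mem ((iff_of_eq (hL _ _ h1)).1 hz')
  refine Set.Subset.antisymm (key h hL hxy) (key h.symm ?_ hxy.symm)
  intro x y e
  exact (hL y x e.symm).symm

lemma exists_lift {L : AddSubgroup G} {x : G} {r : G ⧸ L} (hxr : quotCol a L x = quotCol b L r) :
    ∃ y : G, (y : G ⧸ L) = r ∧ a x = b y := by
  have : a x ∈ quotCol b L r := hxr ▸ ⟨x, rfl, rfl⟩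
  obtain ⟨y, hy, e⟩ := this
  exact ⟨y, hy, e.symm⟩

lemma quot (h : Matched a b) (hG : Nat.card G = p ^ n) {L : AddSubgroup G}
    (hL : Corr a b (· ∈ L) (· ∈ L)) : Matched (quotCol a L) (quotCol b L) where
  zero := h.quotCol_eq hG hL h.zero
  left q hq := by
    obtain ⟨x, rfl⟩ := QuotientAddGroup.mk_surjective q
    obtain ⟨y, hy, e⟩ := exists_lift hq
    rw [QuotientAddGroup.eq_zero_iff] at hy ⊢
    exact (iff_of_eq (hL _ _ e)).2 hy
  right q hq := by
    obtain ⟨x, rfl⟩ := QuotientAddGroup.mk_surjective q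
    obtain ⟨y, hy, e⟩ := exists_lift hq.symm
    rw [QuotientAddGroup.eq_zero_iff] at hy ⊢
    exact (iff_of_eq (hL _ _ e.symm)).1 hy
  conv q r hqr := by
    obtain ⟨x, rfl⟩ := QuotientAddGroup.mk_surjective q
    obtain ⟨y, rfl, e⟩ := exists_lift hqr
    obtain ⟨σ, hσ⟩ := h.conv x y e
    obtain ⟨τ, hτ⟩ := exists_perm_quot (L := L)
      (fun v => (quotCol a L v, quotCol a L ((x : G ⧸ L) - v)))
      (fun v => (quotCol b L v, quotCol b L ((y : G ⧸ L) - v))) σ (fun u => by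
        refine Prod.ext (h.quotCol_eq hG hL (hσ u).1) ?_
        exact h.quotCol_eq hG hL (hσ u).2)
    exact ⟨τ, fun v => ⟨congrArg Prod.fst (hτ v), congrArg Prod.snd (hτ v)⟩⟩

lemma corr_rad (h : Matched a b) (hG : Nat.card G = p ^ n) (i : ι) :
    Corr a b (· ∈ rad a i) (· ∈ rad b i) := by
  have key : ∀ {a b : G → ι}, Matched a b → ∀ t s, a t = b s → t ∈ rad a i → s ∈ rad b i := by
    intro a b h t s hts ht y
    obtain ⟨σ, hσ⟩ := h.conv_add hG hts
    obtain ⟨u, rfl⟩ := σ.surjective y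
    rw [← (hσ u).1, ← (hσ u).2]
    exact ht u
  intro x y hxy
  exact propext ⟨key h x y hxy, key h.symm y x hxy.symm⟩

lemma rad_eq [IsAddCyclic G] (h : Matched a b) (hG : Nat.card G = p ^ n) (i : ι) :
    rad a i = rad b i :=
  h.sub_eq (h.corr_rad hG i)

/-- The radical of a class is matched with itself, being equal to that of the corresponding class. -/
lemma corr_rad' [IsAddCyclic G] (h : Matched a b) (hG : Nat.card G = p ^ n) (i : ι) :
    Corr a b (· ∈ rad a i) (· ∈ rad a i) := by
  have := h.corr_rad hG i
  rwa [← h.rad_eq hG] at this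

/-- Conjugate classes have the same radical. -/
lemma mem_rad_smul (h : Matched a a) (hG : Nat.card G = p ^ n) {m : ℤ}
    (hm : ¬ (p : ℤ) ∣ m) {g t : G}
    (ht : t ∈ rad a (a g)) : t ∈ rad a (a (m • g)) := by
  obtain ⟨m', hm', h1, h2⟩ := exists_inv (G := G) hG hm
  intro x
  rw [← h2 x, h.mult_iff hG hm, ← h2 t, ← smul_add, h.mult_iff hG hm]
  exact zsmul_mem ht m' _

end Matched

/-- Matched colourings that agree at a generator agree modulo the radical of its class. -/
theorem exists_rad_agree [IsAddCyclic G] (h : Matched a b) (hG : Nat.card G = p ^ n) {g : G}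
    (hg : Gen g) (hab : a g = b g) (x : G) : ∃ l ∈ rad a (a g), a x = b (x + l) := by
  set L := rad a (a g) with hLdef
  have hL : Matched.Corr a b (· ∈ L) (· ∈ L) := h.corr_rad' hG _
  have hLa : Matched.Corr a a (· ∈ L) (· ∈ L) := h.self.corr_rad' hG _
  obtain ⟨k, -, hk⟩ : ∃ k ≤ n, Nat.card (G ⧸ L) = p ^ k := by
    refine (Nat.dvd_prime_pow hp.out).1 ?_
    rw [← hG]
    exact AddSubgroup.card_quotient_dvd_card L
  have hcyc : IsAddCyclic (G ⧸ L) :=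
    isAddCyclic_of_surjective (QuotientAddGroup.mk' L) (QuotientAddGroup.mk'_surjective L)
  have hgq : Gen (g : G ⧸ L) := by
    intro q
    obtain ⟨y, rfl⟩ := QuotientAddGroup.mk_surjective q
    obtain ⟨k, rfl⟩ := hg y
    exact ⟨k, rfl⟩
  have hiff : ∀ x : G, a x = a g ↔ quotCol a L x = quotCol a L g := by
    intro x
    refine ⟨fun e => h.self.quotCol_eq hG hLa e, fun e => ?_⟩
    obtain ⟨y, hy, e'⟩ := Matched.exists_lift e
    have hl : -g + y ∈ L := QuotientAddGroup.eq.1 hy.symm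
    have := (hl g).1 rfl
    rw [add_neg_cancel_left] at this
    rw [e', this]
  have heq := eq_of_trivial_rad (h.quot hG hL) hk hgq (h.quotCol_eq hG hL hab) (by
    intro q hq
    obtain ⟨t, rfl⟩ := QuotientAddGroup.mk_surjective q
    rw [QuotientAddGroup.eq_zero_iff]
    intro x
    rw [hiff, hiff]
    exact hq x)
  obtain ⟨y, hy, e⟩ := Matched.exists_lift (congrFun heq (x : G ⧸ L))
  refine ⟨-x + y, QuotientAddGroup.eq.1 hy.symm, ?_⟩
  rw [add_neg_cancel_left, e]

end Quot

/-! ### Gluing -/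

universe u v
section Iso
variable {p n : ℕ} [hp : Fact p.Prime]

/-- A maximal proper subgroup that is a union of classes: all classes outside it contain
generators. -/
lemma exists_max_sub {G : Type u} {ι : Type v} [AddCommGroup G] [Finite G] [IsAddCyclic G]
    {a b : G → ι} (h : Matched a b) (hG : Nat.card G = p ^ n) (hn : n ≠ 0) :
    ∃ U : AddSubgroup G, U ≠ ⊤ ∧ Matched.Corr a b (· ∈ U) (· ∈ U) ∧
      (∀ x ∉ U, ∃ z, Gen z ∧ a z = a x) ∧ ∀ y ∉ U, ∃ z, Gen z ∧ b z = b y := by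
  obtain ⟨U, ⟨hU, hUc⟩, hmax⟩ := Set.exists_max_image
    {U : AddSubgroup G | U ≠ ⊤ ∧ Matched.Corr a b (· ∈ U) (· ∈ U)}
    (fun U => Nat.card U) (Set.toFinite _) ⟨⊥, by
      intro hbt
      have h1 : Nat.card (⊥ : AddSubgroup G) = Nat.card G := by rw [hbt]; simp
      rw [AddSubgroup.card_bot, hG] at h1
      exact (Nat.one_lt_pow hn hp.out.one_lt).ne h1, by
      intro x y hxy
      simp only [AddSubgroup.mem_bot]
      exact propext (h.zero_iff hxy)⟩
  refine ⟨U, hU, hUc, ?_⟩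
  have key : ∀ c : G → ι, (∀ i, Matched.Corr a b (· ∈ AddSubgroup.closure {x | c x = i})
      (· ∈ AddSubgroup.closure {x | c x = i})) → ∀ x ∉ U, ∃ z, Gen z ∧ c z = c x := by
    intro c hc x hx
    have hxC : x ∈ AddSubgroup.closure {y | c y = c x} := AddSubgroup.subset_closure rfl
    have htop : AddSubgroup.closure {y | c y = c x} = ⊤ := by
      by_contra hne
      have hcard := hmax _ ⟨hne, hc (c x)⟩
      rcases le_total_sub hG U (AddSubgroup.closure {y | c y = c x}) with hle | hle
      · have := AddSubgroup.eq_of_le_of_card_ge hle hcard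
        exact hx (this ▸ hxC)
      · exact hx (hle hxC)
    obtain ⟨z, hz, e⟩ := exists_closure_eq hG (S := {y | c y = c x}) ⟨x, rfl⟩
    refine ⟨z, fun y => ?_, hz⟩
    have : y ∈ AddSubgroup.zmultiples z := by rw [← e, htop]; trivial
    obtain ⟨k, hk⟩ := AddSubgroup.mem_zmultiples_iff.1 this
    exact ⟨k, hk.symm⟩
  refine ⟨key a (h.closure_class hG), key b fun i x y e => ?_⟩
  exact (h.symm.closure_class hG i y x e.symm).symm

/-- The conclusion of the gluing theorem: a map `f` that realizes the matching of `a` with `b` and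
is congruent modulo `L` to multiplication by `M`. -/
def HasIso {G : Type u} {ι : Type v} [AddCommGroup G] (a b : G → ι) (L : AddSubgroup G) (M : ℤ) :
    Prop :=
  ∃ f : G → G, (∀ x, f x - M • x ∈ L) ∧ ∀ x y, a (x - y) = b (f x - f y)

/-- Extension of `f` from `U` to `G`: on the coset of `U` with representative `r` the map is
`r + u ↦ M • r + f u`. If `x - y ∉ U`, only the residue of `F x - F y` modulo `L` matters. -/
lemma hasIso_of_restrict {G : Type u} {ι : Type v} [AddCommGroup G] [Finite G]
    {a b : G → ι} (hG : Nat.card G = p ^ n) {L U : AddSubgroup G} {M : ℤ}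
    (hM : ¬ (p : ℤ) ∣ M) (hML : ∀ x, ∃ l ∈ L, a x = b (M • x + l))
    (hout : ∀ y ∉ U, ∀ l ∈ L, b (y + l) = b y)
    (hU : HasIso (fun x : U => a x) (fun x : U => b x) (L.addSubgroupOf U) M) :
    HasIso a b L M := by
  obtain ⟨f, hfL, hf⟩ := hU
  let r : G → G := fun x => Quotient.out (x : G ⧸ U)
  have hr : ∀ x, x - r x ∈ U := by
    intro x
    have : ((r x : G) : G ⧸ U) = x := Quotient.out_eq _
    rw [QuotientAddGroup.eq, neg_add_eq_sub] at this
    exact this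
  have hrr : ∀ x y, x - y ∈ U → r x = r y := by
    intro x y hxy
    have : (y : G ⧸ U) = x := by rw [QuotientAddGroup.eq, neg_add_eq_sub]; exact hxy
    simp only [r, this]
  let F : G → G := fun x => M • r x + f ⟨x - r x, hr x⟩
  have hF : ∀ x, F x - M • x ∈ L := by
    intro x
    have := AddSubgroup.mem_addSubgroupOf.1 (hfL ⟨x - r x, hr x⟩)
    simp only [AddSubgroup.coe_sub, AddSubgroup.coe_zsmul] at this
    convert this using 1
    simp only [F, smul_sub]
    abel
  refine ⟨F, hF, fun x y => ?_⟩
  by_cases hxy : x - y ∈ U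
  · have := hf ⟨x - r x, hr x⟩ ⟨y - r y, hr y⟩
    simp only [AddSubgroup.coe_sub] at this
    have e := hrr x y hxy
    have e1 : x - r x - (y - r y) = x - y := by rw [e]; abel
    have e2 : F x - F y = f ⟨x - r x, hr x⟩ - f ⟨y - r y, hr y⟩ := by
      simp only [F]
      rw [show M • r x = M • r y by rw [e]]
      abel
    rw [e1] at this
    rw [this, e2]
  · have hMxy : M • (x - y) ∉ U := by rwa [smul_mem_iff hG hM]
    obtain ⟨l, hl, e⟩ := hML (x - y)
    have e2 : F x - F y = M • (x - y) + ((F x - M • x) - (F y - M • y)) := by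
      rw [smul_sub]; abel
    rw [e, e2, hout _ hMxy _ hl, hout _ hMxy _ (sub_mem (hF x) (hF y))]

/-- Matched colourings are isomorphic, and if multiplication by `M` matches the colours modulo `L`,
then the isomorphism can be chosen congruent to it modulo `L`. The control modulo `L` is what makes
the induction work. -/
theorem hasIso {ι : Type v} (n : ℕ) : ∀ {G : Type u} [AddCommGroup G] [Finite G] [IsAddCyclic G]
    {a b : G → ι}, Matched a b → Nat.card G = p ^ n → ∀ L : AddSubgroup G,
    Matched.Corr a b (· ∈ L) (· ∈ L) → ∀ M : ℤ, ¬ (p : ℤ) ∣ M →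
    (∀ x, ∃ l ∈ L, a x = b (M • x + l)) → HasIso a b L M := by
  induction n using Nat.strong_induction_on with
  | h n ih =>
  intro G _ _ _ a b h hG L hL M hM hML
  by_cases hn : n = 0
  · subst hn
    have : Subsingleton G := (Nat.card_eq_one_iff_unique.1 (by simpa using hG)).1
    refine ⟨id, fun x => ?_, fun x y => ?_⟩
    · rw [Subsingleton.elim (id x - M • x) 0]; exact zero_mem _
    · rw [Subsingleton.elim (x - y) 0, Subsingleton.elim (id x - id y) 0, h.zero]
  obtain ⟨U, hU, hUc, hUa, hUb⟩ := exists_max_sub h hG hn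
  obtain ⟨g, hg⟩ := exists_gen (G := G)
  set K := rad a (a g) with hK
  have hKc : Matched.Corr a b (· ∈ K) (· ∈ K) := h.corr_rad' hG _
  have hout : ∀ y ∉ U, ∀ l ∈ K, b (y + l) = b y := by
    intro y hy l hl
    obtain ⟨x, hx⟩ := h.exists_left y
    have hxU : x ∉ U := fun hx' => hy ((iff_of_eq (hUc _ _ hx)).1 hx')
    obtain ⟨z, hz, e⟩ := hUa x hxU
    obtain ⟨m, hm, rfl⟩ := hg.exists_unit hG hz
    have := h.self.mem_rad_smul hG hm hl
    rw [e, hx, h.rad_eq hG] at this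
    exact (this y).1 rfl
  have main : ∀ (L : AddSubgroup G) (M : ℤ), L ≤ K → Matched.Corr a b (· ∈ L) (· ∈ L) →
      ¬ (p : ℤ) ∣ M → (∀ x, ∃ l ∈ L, a x = b (M • x + l)) → HasIso a b L M := by
    intro L M hLK hL hM hML
    refine hasIso_of_restrict hG hM hML (fun y hy l hl => hout y hy l (hLK hl)) ?_
    obtain ⟨k, hkn, hk⟩ :=
      (Nat.dvd_prime_pow hp.out).1 (hG ▸ AddSubgroup.card_addSubgroup_dvd_card U)
    have hlt : k < n := by
      refine lt_of_le_of_ne hkn ?_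
      rintro rfl
      exact hU (AddSubgroup.eq_top_of_card_eq U (hk.trans hG.symm))
    refine ih k hlt (h.restrict hUc) hk (L.addSubgroupOf U) (fun x y e => ?_) M hM fun x => ?_
    · simp only [AddSubgroup.mem_addSubgroupOf]
      exact hL _ _ e
    · obtain ⟨l, hl, e⟩ := hML x
      have h1 : M • (x : G) + l ∈ U := (iff_of_eq (hUc _ _ e)).1 x.2
      have h2 : l ∈ U := (AddSubgroup.add_mem_cancel_left _ (zsmul_mem x.2 M)).1 h1
      exact ⟨⟨l, h2⟩, AddSubgroup.mem_addSubgroupOf.2 hl, e⟩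
  obtain ⟨m, hm, hmg, hmM⟩ : ∃ m : ℤ, ¬ (p : ℤ) ∣ m ∧ a g = b (m • g) ∧ m • g - M • g ∈ L := by
    by_cases hLt : L = ⊤
    · obtain ⟨y, hy⟩ := h.exists_right g
      have hyU : y ∉ U := fun hy' => hg.not_mem hU ((iff_of_eq (hUc _ _ hy)).2 hy')
      obtain ⟨z, hz, e⟩ := hUb y hyU
      obtain ⟨m, hm, rfl⟩ := hg.exists_unit hG hz
      exact ⟨m, hm, by rw [hy, e], hLt ▸ trivial⟩
    · obtain ⟨l, hl, e⟩ := hML g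
      have hgen : Gen (M • g + l) := (hg.smul hG hM).add hG hn fun hh => hh.not_mem hLt hl
      obtain ⟨m, hm, em⟩ := hg.exists_unit hG hgen
      refine ⟨m, hm, by rw [e, em], ?_⟩
      rw [← em, add_sub_cancel_left]
      exact hl
  rcases le_total_sub hG L K with hLK | hKL
  · exact main L M hLK hL hM hML
  · obtain ⟨f, hf, hf'⟩ := main K m le_rfl hKc hm fun x => by
      obtain ⟨l, hl, e⟩ := exists_rad_agree (h.comp_mult hG hm) hG hg hmg x
      exact ⟨m • l, zsmul_mem hl m, by rw [e, smul_add]⟩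
    refine ⟨f, fun x => ?_, hf'⟩
    obtain ⟨k, rfl⟩ := hg x
    have h1 := add_mem (hKL (hf (k • g))) (zsmul_mem hmM k)
    convert h1 using 1
    rw [smul_sub, smul_comm k m, smul_comm k M]
    abel

end Iso

/-! ### From S-rings to matched colourings -/

open SRingPaper
section Final

/-- The basic set containing `g`. -/
noncomputable def cls {G : Type*} [Group G] [Finite G] (A : SRing G) (g : G) : Set G :=
  (A.exists_mem g).choose

variable {G H : Type*} [Group G] [Finite G] [Group H] [Finite H] {A : SRing G} {B : SRing H}
  {φ : Set G → Set H}

lemma cls_mem (A : SRing G) (g : G) : cls A g ∈ A.parts := (A.exists_mem g).choose_spec.1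

lemma mem_cls (A : SRing G) (g : G) : g ∈ cls A g := (A.exists_mem g).choose_spec.2

lemma mem_iff_cls_eq {X : Set G} (hX : X ∈ A.parts) {g : G} : g ∈ X ↔ cls A g = X := by
  refine ⟨fun h => A.eq_of_mem _ (cls_mem A g) _ hX g (mem_cls A g) h, ?_⟩
  rintro rfl
  exact mem_cls A g

lemma cls_eq_one_iff {g : G} : cls A g = cls A 1 ↔ g = 1 := by
  have : cls A 1 = {1} := (mem_iff_cls_eq A.one_mem).1 rfl
  rw [this, ← mem_iff_cls_eq A.one_mem, Set.mem_singleton_iff]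

/-- The fibre of `u ↦ ([u], [u⁻¹ z])` over a pair of basic sets is counted by a structure
constant. -/
lemma card_fiber {X Y : Set G} (hX : X ∈ A.parts) (hY : Y ∈ A.parts) (z : G) :
    Nat.card {u : G // cls A u = X ∧ cls A (u⁻¹ * z) = Y} = structConst X Y z := by
  refine Nat.card_congr ⟨fun u => ⟨(u, u.1⁻¹ * z), ?_⟩, fun q => ⟨q.1.1, ?_⟩, ?_, ?_⟩
  · exact ⟨(mem_iff_cls_eq hX).2 u.2.1, (mem_iff_cls_eq hY).2 u.2.2, mul_inv_cancel_left _ _⟩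
  · obtain ⟨⟨x, y⟩, hx, hy, hz⟩ := q
    refine ⟨(mem_iff_cls_eq hX).1 hx, (mem_iff_cls_eq hY).1 ?_⟩
    simp only at hx hy hz ⊢
    rw [← hz, inv_mul_cancel_left]
    exact hy
  · intro u
    rfl
  · rintro ⟨⟨x, y⟩, hx, hy, hz⟩
    simp only at hz
    simp only [Subtype.mk.injEq, Prod.mk.injEq, true_and]
    rw [← hz, inv_mul_cancel_left]

/-- An algebraic isomorphism yields bijections `G ≃ H` compatible with the factorizations of a
given pair of elements in corresponding basic sets. -/
lemma exists_equiv (hφ : IsAlgIso A B φ) {z : G} {z' : H} (hz : φ (cls A z) = cls B z') :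
    ∃ σ : G ≃ H, ∀ u, φ (cls A u) = cls B (σ u) ∧
      φ (cls A (u⁻¹ * z)) = cls B ((σ u)⁻¹ * z') := by
  have key : ∀ c : Set H × Set H,
      Nonempty ({u : G // (φ (cls A u), φ (cls A (u⁻¹ * z))) = c} ≃
        {u : H // (cls B u, cls B (u⁻¹ * z')) = c}) := by
    rintro ⟨X', Y'⟩
    simp only [Prod.mk.injEq]
    by_cases hc : X' ∈ B.parts ∧ Y' ∈ B.parts
    · obtain ⟨X, hX, rfl⟩ := hφ.bijOn.surjOn hc.1
      obtain ⟨Y, hY, rfl⟩ := hφ.bijOn.surjOn hc.2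
      have e : ∀ u : G, ∀ X ∈ A.parts, φ (cls A u) = φ X ↔ cls A u = X := fun u X hX =>
        hφ.bijOn.injOn.eq_iff (cls_mem A u) hX
      simp only [e _ X hX, e _ Y hY]
      apply Finite.card_eq.1
      rw [card_fiber hX hY, card_fiber hc.1 hc.2]
      exact hφ.structConst_eq X hX Y hY (cls A z) (cls_mem A z) z (mem_cls A z) z'
        (hz ▸ mem_cls B z')
    · have h1 : IsEmpty {u : G // φ (cls A u) = X' ∧ φ (cls A (u⁻¹ * z)) = Y'} :=
        ⟨fun u => hc ⟨u.2.1 ▸ hφ.bijOn.mapsTo (cls_mem A _),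
          u.2.2 ▸ hφ.bijOn.mapsTo (cls_mem A _)⟩⟩
      have h2 : IsEmpty {u : H // cls B u = X' ∧ cls B (u⁻¹ * z') = Y'} :=
        ⟨fun u => hc ⟨u.2.1 ▸ cls_mem B _, u.2.2 ▸ cls_mem B _⟩⟩
      exact ⟨Equiv.equivOfIsEmpty _ _⟩
  have e := fun c => (key c).some
  refine ⟨Equiv.ofFiberEquiv e, fun u => ?_⟩
  have := Equiv.ofFiberEquiv_map e u
  exact ⟨(congrArg Prod.fst this).symm, (congrArg Prod.snd this).symm⟩

lemma map_cls_one (hφ : IsAlgIso A B φ) : φ (cls A 1) = cls B 1 := by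
  obtain ⟨Y, hY, e⟩ := hφ.bijOn.surjOn (cls_mem B 1)
  obtain ⟨z, hz⟩ := A.nonempty_mem Y hY
  rw [← (mem_iff_cls_eq hY).1 hz] at e
  obtain ⟨σ, hσ⟩ := exists_equiv hφ e
  obtain ⟨h1, h2⟩ := hσ 1
  rw [inv_one, one_mul, mul_one, e] at h2
  have := cls_eq_one_iff.1 h2.symm
  rw [inv_eq_one] at this
  rw [h1, this]

/-- The group-theoretic form of the result: transporting `B` to `G` along a group isomorphism
`e : G ≃* H` turns `φ` into a pair of matched colourings of `Additive G`, and a bijection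
matching their differences gives the combinatorial isomorphism. -/
lemma exists_inducedBy {G H : Type*} [CommGroup G] [Finite G] [CommGroup H] [Finite H]
    [IsCyclic G] [IsCyclic H] {p n : ℕ} [hp : Fact p.Prime] (hG : Nat.card G = p ^ n)
    {A : SRing G} {B : SRing H} {φ : Set G → Set H} (hφ : IsAlgIso A B φ) :
    ∃ f : G → H, InducedBy A φ f := by
  have h1 := map_cls_one hφ
  obtain ⟨σ₀, -⟩ := exists_equiv hφ h1
  let e : G ≃* H := mulEquivOfCyclicCardEq (Nat.card_congr σ₀)
  let a : Additive G → Set H := fun x => φ (cls A x.toMul)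
  let b : Additive G → Set H := fun y => cls B (e y.toMul)
  have inj : ∀ x y : G, φ (cls A x) = φ (cls A y) → cls A x = cls A y := fun x y h =>
    hφ.bijOn.injOn (cls_mem A x) (cls_mem A y) h
  have hab : Matched a b := by
    refine ⟨?_, fun x hx => ?_, fun y hy => ?_, fun x y hxy => ?_⟩
    · simp [a, b, h1]
    · simp only [a, b, toMul_zero, map_one, ← h1] at hx
      have hx1 : x.toMul = 1 := cls_eq_one_iff.1 (inj _ _ hx)
      exact hx1
    · simp only [a, b, toMul_zero, h1] at hy
      have := cls_eq_one_iff.1 hy.symm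
      have hy1 : y.toMul = 1 := (map_eq_one_iff e e.injective).1 this
      exact hy1
    · obtain ⟨σ, hσ⟩ := exists_equiv hφ hxy
      refine ⟨Additive.toMul.trans ((σ.trans e.symm.toEquiv).trans Additive.ofMul), fun u => ?_⟩
      obtain ⟨h1, h2⟩ := hσ u.toMul
      refine ⟨?_, ?_⟩
      · simpa [a, b] using h1
      · simpa [a, b, div_eq_inv_mul] using h2
  obtain ⟨f, -, hf⟩ := hasIso n hab (p := p) (by rw [← hG]; rfl) ⊤ (fun _ _ _ => rfl) 1
    (Nat.prime_iff_prime_int.1 hp.out).not_dvd_one fun x => by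
      obtain ⟨y, hy⟩ := hab.exists_right x
      exact ⟨y - x, trivial, by rw [one_smul, add_sub_cancel, hy]⟩
  have hinj : Function.Injective f := by
    intro x y hxy
    have := hf x y
    rw [hxy, sub_self] at this
    exact sub_eq_zero.1 (hab.left _ this)
  let F : G → H := fun x => e (f (Additive.ofMul x)).toMul
  have hF : Function.Bijective F :=
    e.bijective.comp (Additive.toMul.bijective.comp
      ((Finite.injective_iff_bijective.1 hinj).comp Additive.ofMul.bijective))
  have hFa : ∀ x y : G, φ (cls A (x / y)) = cls B (F x / F y) := by
    intro x y
    have := hf (Additive.ofMul x) (Additive.ofMul y)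
    simpa [a, b, F] using this
  refine ⟨F, hF, fun X hX => ?_⟩
  have hφX := hφ.bijOn.mapsTo hX
  ext ⟨u, v⟩
  constructor
  · rintro ⟨⟨g, k⟩, ⟨x, hx, hk⟩, e⟩
    simp only [Prod.mk.injEq] at e hk
    obtain ⟨rfl, rfl⟩ := e
    subst hk
    refine ⟨F (x * g) / F g, ?_, by simp⟩
    rw [mem_iff_cls_eq hφX, ← hFa, mul_div_cancel_right, (mem_iff_cls_eq hX).1 hx]
  · rintro ⟨x, hx, hv⟩
    simp only at hv
    subst hv
    obtain ⟨g, rfl⟩ := hF.surjective u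
    obtain ⟨k, hk⟩ := hF.surjective (x * F g)
    refine ⟨(g, k), ⟨k / g, ?_, by simp⟩, by simp [hk]⟩
    have := hFa k g
    rw [hk, mul_div_cancel_right, (mem_iff_cls_eq hφX).1 hx] at this
    rw [mem_iff_cls_eq hX]
    exact hφ.bijOn.injOn (cls_mem A _) hX this

end Final

end CyclicSep

open SRingPaper in
/-- for every prime `p`, every S-ring over a cyclic `p`-group is
separable with respect to the class of finite cyclic groups. -/
theorem cyclic_p_group_is_separable_wrt_cyclic
    (p : ℕ) (hp : p.Prime) (G : Type*) [Group G] [Finite G]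
    (hcyc : IsCyclic G) (hcard : ∃ k : ℕ, Nat.card G = p ^ k)
    (A : SRing G) : SepCyclic A := by
  intro H _ _ hH B φ hφ
  obtain ⟨n, hn⟩ := hcard
  have : Fact p.Prime := ⟨hp⟩
  let _ : CommGroup G := IsCyclic.commGroup
  let _ : CommGroup H := IsCyclic.commGroup
  exact CyclicSep.exists_inducedBy hn hφ
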